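/- arXiv:0907.1792 — 4 statements merged into one kernel-verified Lean document; each statement's English description precedes it below -/
import Mathlib

section
/- Let g : ℝ → ℂ be a measurable function admitting an extension g̃ : {ω ∈ ℂ : Im ω ≥ 0} → ℂ such that (i) g̃ is analytic on the open upper half-plane {ω : Im ω > 0}; (ii) |g̃(ω)| ≤ 1 for all ω with Im ω ≥ 0; (iii) lim_{b→0+} g̃(a+ib) = g(a) for Lebesgue-almost all a ∈ ℝ. Then for every φ ∈ L²(ℝ), ∫_{[0,∞)} |(F*(g·φ))(y)|² dy ≤ ∫_{[0,∞)} |(F*φ)(y)|² dy, i.e. the operator inequality g(M)* P̂₊ g(M) ≤ P̂₊ holds, where M is multiplication by the variable, P̂₊ = F χ_{[0,∞)}(M) F*, and g·φ denotes the pointwise product. -/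
open MeasureTheory Complex Filter Set

noncomputable section

/-- `L²(ℝ)` with respect to Lebesgue measure. -/
abbrev H2 : Type := Lp ℂ 2 (volume : Measure ℝ)

/-- `𝓕` is the Fourier–Plancherel operator: a unitary on `L²(ℝ)` which is given on
`L¹ ∩ L²` by the usual integral formula `(𝓕φ)(y) = (2π)^{-1/2} ∫ e^{-iyx} φ(x) dx`, and whose
inverse `𝓕* = 𝓕⁻¹` is given on `L¹ ∩ L²` by `(𝓕*φ)(y) = (2π)^{-1/2} ∫ e^{iyx} φ(x) dx`. -/
def IsFourier (𝓕 : H2 ≃ₗᵢ[ℂ] H2) : Prop :=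
  (∀ φ : H2, Integrable (⇑φ) volume →
      (⇑(𝓕 φ) : ℝ → ℂ) =ᵐ[volume]
        fun y : ℝ => (Real.sqrt (2 * Real.pi) : ℂ)⁻¹ *
          ∫ x : ℝ, Complex.exp (-(Complex.I * y * x)) * φ x) ∧
  (∀ φ : H2, Integrable (⇑φ) volume →
      (⇑(𝓕.symm φ) : ℝ → ℂ) =ᵐ[volume]
        fun y : ℝ => (Real.sqrt (2 * Real.pi) : ℂ)⁻¹ *
          ∫ x : ℝ, Complex.exp (Complex.I * y * x) * φ x)

/-- The multiplication operator `g(M)` on `L²`: `φ ↦ g·φ` (pointwise product), defined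
whenever the product is again in `L²`. -/
def mulLp {μ : Measure ℝ} (g : ℝ → ℂ) (φ : Lp ℂ 2 μ) : Lp ℂ 2 μ := by
  classical exact if h : MemLp (fun x => g x * φ x) 2 μ then h.toLp _ else 0

/-- `gt` is an extension of `g : ℝ → ℂ` to the closed upper half-plane which is analytic on the
open upper half-plane, bounded by one there, and has non-tangential boundary values `g` a.e. -/
structure HardyExt (g : ℝ → ℂ) (gt : ℂ → ℂ) : Prop where
  agree : ∀ a : ℝ, gt (a : ℂ) = g a
  analytic : DifferentiableOn ℂ gt {ω : ℂ | 0 < ω.im}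
  bounded : ∀ ω : ℂ, 0 ≤ ω.im → ‖gt ω‖ ≤ 1
  boundary : ∀ᵐ a : ℝ ∂volume,
    Tendsto (fun b : ℝ => gt ((a : ℂ) + b * Complex.I)) (nhdsWithin 0 (Ioi 0)) (nhds (g a))


structure Wt (w : ℝ → ℝ) : Prop where
  meas : Measurable w
  nonneg : ∀ x, 0 ≤ w x
  le_one : ∀ x, w x ≤ 1
  int : Integrable w volume

lemma Wt.memLp {w : ℝ → ℝ} (hw : Wt w) : MemLp w 2 volume := by
  rw [memLp_two_iff_integrable_sq hw.meas.aestronglyMeasurable]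
  refine hw.int.mono' (hw.meas.pow_const 2).aestronglyMeasurable (Eventually.of_forall fun x => ?_)
  have h0 := hw.nonneg x
  have h1 := hw.le_one x
  rw [Real.norm_of_nonneg (by positivity)]
  nlinarith

lemma norm_exp_aux (s y : ℝ) : ‖Complex.exp (Complex.I * s * y)‖ = 1 := by
  have : Complex.I * s * y = ((s * y : ℝ) : ℂ) * Complex.I := by push_cast; ring
  rw [this, Complex.norm_exp_ofReal_mul_I]

def Efun (w : ℝ → ℝ) (s : ℝ) (y : ℝ) : ℂ := (w y : ℂ) * Complex.exp (Complex.I * s * y)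

lemma norm_Efun {w : ℝ → ℝ} (s y : ℝ) : ‖Efun w s y‖ = ‖w y‖ := by
  rw [Efun, norm_mul, norm_exp_aux, mul_one, Complex.norm_real]

lemma Efun_meas {w : ℝ → ℝ} (hw : Wt w) (s : ℝ) : Measurable (Efun w s) := by
  have := hw.meas
  unfold Efun
  fun_prop

lemma Efun_memLp {w : ℝ → ℝ} (hw : Wt w) (s : ℝ) : MemLp (Efun w s) 2 volume :=
  hw.memLp.of_le (Efun_meas hw s).aestronglyMeasurable
    (Eventually.of_forall fun y => (norm_Efun s y).le)

lemma Efun_int {w : ℝ → ℝ} (hw : Wt w) (s : ℝ) : Integrable (Efun w s) volume :=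
  hw.int.mono (Efun_meas hw s).aestronglyMeasurable
    (Eventually.of_forall fun y => (norm_Efun s y).le)

def EL {w : ℝ → ℝ} (hw : Wt w) (s : ℝ) : H2 := (Efun_memLp hw s).toLp _

/-- density lemma -/
lemma density (𝓕 : H2 ≃ₗᵢ[ℂ] H2) (h𝓕 : IsFourier 𝓕) {w : ℝ → ℝ} (hw : Wt w) (h : H2)
    (hh : ∀ s, inner ℂ (EL hw s) h = 0) : ∀ᵐ y, (w y : ℂ) * h y = 0 := by
  have hmem : MemLp (fun y => (w y : ℂ) * h y) 2 volume := by
    refine (Lp.memLp h).of_le ?_ (Eventually.of_forall fun y => ?_)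
    · exact (Complex.measurable_ofReal.comp hw.meas).aestronglyMeasurable.mul
        (Lp.aestronglyMeasurable h)
    · rw [norm_mul, Complex.norm_real, Real.norm_of_nonneg (hw.nonneg y)]
      exact mul_le_of_le_one_left (norm_nonneg _) (hw.le_one y)
  have hint : Integrable (fun y => (w y : ℂ) * h y) volume := by
    have h1 : MemLp (fun y => (w y : ℂ)) 2 volume := hw.memLp.ofReal
    exact h1.integrable_mul (Lp.memLp h)
  set m : H2 := hmem.toLp _ with hm
  have hmc : (m : ℝ → ℂ) =ᵐ[volume] fun y => (w y : ℂ) * h y := hmem.coeFn_toLp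
  have h1 := h𝓕.1 m (hint.congr hmc.symm)
  have h2 : 𝓕 m = 0 := by
    rw [Lp.eq_zero_iff_ae_eq_zero]
    filter_upwards [h1] with s hs
    rw [hs]
    have := hh s
    rw [L2.inner_def] at this
    have e : ∫ x : ℝ, Complex.exp (-(Complex.I * s * x)) * m x = ∫ a, inner ℂ ((EL hw s) a) (h a) := by
      apply integral_congr_ae
      filter_upwards [hmc, (Efun_memLp hw s).coeFn_toLp] with x hx hx2
      rw [hx, EL, hx2, RCLike.inner_apply, Efun, map_mul, ← Complex.exp_conj]
      simp only [map_mul, Complex.conj_I, Complex.conj_ofReal]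
      rw [show -(Complex.I * s * x) = -Complex.I * s * x by ring]
      ring
    rw [e, this]; simp
  have h3 : m = 0 := by simpa using h2
  have h4 := (Lp.eq_zero_iff_ae_eq_zero (f := m)).1 h3
  filter_upwards [h4, hmc] with y hy hy2
  rw [← hy2, hy]; rfl

lemma wt_neg : Wt ((Iic 0).indicator Real.exp) where
  meas := Real.measurable_exp.indicator measurableSet_Iic
  nonneg x := indicator_nonneg (fun x _ => (Real.exp_pos x).le) x
  le_one x := by
    by_cases hx : x ∈ Iic (0:ℝ)
    · rw [indicator_of_mem hx]; exact Real.exp_le_one_iff.2 hx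
    · rw [indicator_of_notMem hx]; exact zero_le_one
  int := (integrableOn_exp_Iic 0).integrable_indicator measurableSet_Iic

lemma wt_pos : Wt ((Ioi 0).indicator fun x => Real.exp (-x)) where
  meas := by
    refine Measurable.indicator ?_ measurableSet_Ioi
    fun_prop
  nonneg x := indicator_nonneg (fun x _ => (Real.exp_pos _).le) x
  le_one x := by
    by_cases hx : x ∈ Ioi (0:ℝ)
    · rw [indicator_of_mem hx]; exact Real.exp_le_one_iff.2 (by have := mem_Ioi.1 hx; linarith)
    · rw [indicator_of_notMem hx]; exact zero_le_one
  int := (integrableOn_exp_neg_Ioi 0).integrable_indicator measurableSet_Ioi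

lemma fourierE_neg (𝓕 : H2 ≃ₗᵢ[ℂ] H2) (h𝓕 : IsFourier 𝓕) (s : ℝ) :
    (⇑(𝓕 (EL wt_neg s)) : ℝ → ℂ) =ᵐ[volume] fun x : ℝ =>
      (Real.sqrt (2 * Real.pi) : ℂ)⁻¹ * (1 + Complex.I * (s - x))⁻¹ := by
  have hc := (Efun_memLp wt_neg s).coeFn_toLp
  refine (h𝓕.1 (EL wt_neg s) ((Efun_int wt_neg s).congr hc.symm)).trans ?_
  refine Eventually.of_forall fun x => ?_
  simp only
  congr 1
  have hre : 0 < (1 + Complex.I * ((s:ℂ) - x)).re := by simp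
  have := integral_exp_mul_complex_Iic hre 0
  rw [Complex.ofReal_zero, mul_zero, Complex.exp_zero, one_div] at this
  rw [← this, ← integral_indicator measurableSet_Iic]
  apply integral_congr_ae
  filter_upwards [hc] with y hy
  rw [EL, hy, Efun]
  by_cases h : y ∈ Iic (0:ℝ)
  · rw [indicator_of_mem h, indicator_of_mem h, Complex.ofReal_exp, ← Complex.exp_add,
      ← Complex.exp_add]
    congr 1; ring
  · rw [indicator_of_notMem h, indicator_of_notMem h]; simp

lemma fourierE_pos (𝓕 : H2 ≃ₗᵢ[ℂ] H2) (h𝓕 : IsFourier 𝓕) (s : ℝ) :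
    (⇑(𝓕 (EL wt_pos s)) : ℝ → ℂ) =ᵐ[volume] fun x : ℝ =>
      (Real.sqrt (2 * Real.pi) : ℂ)⁻¹ * (1 - Complex.I * (s - x))⁻¹ := by
  have hc := (Efun_memLp wt_pos s).coeFn_toLp
  refine (h𝓕.1 (EL wt_pos s) ((Efun_int wt_pos s).congr hc.symm)).trans ?_
  refine Eventually.of_forall fun x => ?_
  simp only
  congr 1
  have hre : (-(1 - Complex.I * ((s:ℂ) - x))).re < 0 := by simp
  have := integral_exp_mul_complex_Ioi hre 0
  rw [Complex.ofReal_zero, mul_zero, Complex.exp_zero, neg_div_neg_eq, one_div] at this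
  rw [← this, ← integral_indicator measurableSet_Ioi]
  apply integral_congr_ae
  filter_upwards [hc] with y hy
  rw [EL, hy, Efun]
  by_cases h : y ∈ Ioi (0:ℝ)
  · rw [indicator_of_mem h, indicator_of_mem h, Complex.ofReal_exp, ← Complex.exp_add,
      ← Complex.exp_add]
    congr 1; push_cast; ring
  · rw [indicator_of_notMem h, indicator_of_notMem h]; simp

lemma den_re (s : ℝ) (z : ℂ) : (1 + Complex.I * (s - z)).re = 1 + z.im := by simp
lemma den_im (s : ℝ) (z : ℂ) : (1 + Complex.I * (s - z)).im = s - z.re := by simp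

lemma den_ne (s : ℝ) (z : ℂ) (hz : 0 ≤ z.im) : 1 + Complex.I * (s - z) ≠ 0 := by
  intro h
  have := den_re s z
  rw [h] at this
  simp at this
  linarith

lemma den_sq (s : ℝ) (z : ℂ) (hz : 0 ≤ z.im) :
    1 + (z.re - s) ^ 2 ≤ ‖1 + Complex.I * (s - z)‖ ^ 2 := by
  rw [← Complex.normSq_eq_norm_sq, Complex.normSq_apply, den_re, den_im]
  nlinarith

def kern (gt : ℂ → ℂ) (s t : ℝ) (z : ℂ) : ℂ :=
  (1 + Complex.I * (t - z))⁻¹ * gt z * (1 + Complex.I * (s - z))⁻¹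

lemma kern_bound {gt : ℂ → ℂ} (hb : ∀ ω : ℂ, 0 ≤ ω.im → ‖gt ω‖ ≤ 1) (s t : ℝ) (z : ℂ)
    (hz : 0 ≤ z.im) :
    ‖kern gt s t z‖ ≤ (1 + (z.re - s) ^ 2)⁻¹ + (1 + (z.re - t) ^ 2)⁻¹ := by
  have h1 := inv_anti₀ (by positivity) (den_sq s z hz)
  have h2 := inv_anti₀ (by positivity) (den_sq t z hz)
  have h3 := hb z hz
  rw [kern, norm_mul, norm_mul, norm_inv, norm_inv]
  rw [← inv_pow] at h1 h2
  set a := ‖1 + Complex.I * (s - z)‖⁻¹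
  set b := ‖1 + Complex.I * (t - z)‖⁻¹
  have ha : 0 ≤ a := by positivity
  have hb : 0 ≤ b := by positivity
  have : b * ‖gt z‖ * a ≤ b * 1 * a := by gcongr
  nlinarith [sq_nonneg (a - b), sq_nonneg a, sq_nonneg b]

lemma kern_bound2 {gt : ℂ → ℂ} (hb : ∀ ω : ℂ, 0 ≤ ω.im → ‖gt ω‖ ≤ 1) (s t : ℝ) (z : ℂ)
    (hz : 0 ≤ z.im) (R : ℝ) (hR : 2 * |s| + 2 * |t| + 1 ≤ R) (h : R ≤ z.im ∨ R = |z.re|) :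
    ‖kern gt s t z‖ ≤ 4 / R ^ 2 := by
  have hR0 : 0 < R := by have := abs_nonneg s; have := abs_nonneg t; linarith
  have key : ∀ u : ℝ, 2 * |u| ≤ R → R / 2 ≤ ‖1 + Complex.I * (u - z)‖ := by
    intro u hu
    rcases h with h | h
    · have := Complex.abs_re_le_norm (1 + Complex.I * (u - z))
      rw [den_re] at this
      have := le_abs_self (1 + z.im)
      linarith
    · have := Complex.abs_im_le_norm (1 + Complex.I * (u - z))
      rw [den_im] at this
      have := abs_sub_abs_le_abs_sub z.re u
      rw [abs_sub_comm] at this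
      linarith
  have h1 := inv_anti₀ (by positivity) (key s (by have := abs_nonneg t; linarith))
  have h2 := inv_anti₀ (by positivity) (key t (by have := abs_nonneg s; linarith))
  have h3 := hb z hz
  rw [kern, norm_mul, norm_mul, norm_inv, norm_inv]
  calc _ ≤ (R / 2)⁻¹ * 1 * (R / 2)⁻¹ := by gcongr
    _ = 4 / R ^ 2 := by field_simp; norm_num

lemma bound_int (s t : ℝ) :
    Integrable (fun x : ℝ => (1 + (x - s) ^ 2)⁻¹ + (1 + (x - t) ^ 2)⁻¹) volume :=
  (integrable_inv_one_add_sq.comp_sub_right s).add (integrable_inv_one_add_sq.comp_sub_right t)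

lemma kern_diff {g : ℝ → ℂ} {gt : ℂ → ℂ} (hgt : HardyExt g gt) (s t : ℝ) :
    DifferentiableOn ℂ (kern gt s t) {ω : ℂ | 0 < ω.im} := by
  have h : ∀ u : ℝ, DifferentiableOn ℂ (fun z => (1 + Complex.I * ((u:ℂ) - z))⁻¹)
      {ω : ℂ | 0 < ω.im} := by
    intro u
    apply DifferentiableOn.inv
    · fun_prop
    · intro z hz
      exact den_ne u z (le_of_lt hz)
  exact ((h t).mul hgt.analytic).mul (h s)

lemma kern_cont {g : ℝ → ℂ} {gt : ℂ → ℂ} (hgt : HardyExt g gt) (s t b : ℝ) (hb : 0 < b) :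
    Continuous (fun x : ℝ => kern gt s t (x + b * Complex.I)) := by
  refine (kern_diff hgt s t).continuousOn.comp_continuous (by fun_prop) ?_
  intro x; simpa using hb

lemma kern_int {g : ℝ → ℂ} {gt : ℂ → ℂ} (hgt : HardyExt g gt) (s t b : ℝ) (hb : 0 < b) :
    Integrable (fun x : ℝ => kern gt s t (x + b * Complex.I)) := by
  refine (bound_int s t).mono' (kern_cont hgt s t b hb).aestronglyMeasurable
    (Eventually.of_forall fun x => ?_)
  have := kern_bound hgt.bounded s t (x + b * Complex.I) (by simpa using hb.le)
  simpa using this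

lemma cauchy_b {g : ℝ → ℂ} {gt : ℂ → ℂ} (hgt : HardyExt g gt) (s t b : ℝ) (hb : 0 < b) :
    ∫ x : ℝ, kern gt s t (x + b * Complex.I) = 0 := by
  have h1 := intervalIntegral_tendsto_integral (kern_int hgt s t b hb)
    (tendsto_neg_atTop_atBot (G := ℝ)) tendsto_id
  refine tendsto_nhds_unique h1 ?_
  refine squeeze_zero_norm' (a := fun R : ℝ => 16 / R) ?_
    (tendsto_const_nhds.div_atTop tendsto_id)
  filter_upwards [eventually_ge_atTop (2 * |s| + 2 * |t| + 1)] with R hR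
  have hR0 : 0 < R := by have := abs_nonneg s; have := abs_nonneg t; linarith
  have hc := Complex.integral_boundary_rect_eq_zero_of_differentiableOn (kern gt s t)
    (⟨-R, b⟩ : ℂ) (⟨R, b + R⟩ : ℂ) ((kern_diff hgt s t).mono (by
      rintro z ⟨_, hz⟩
      simp only [mem_preimage] at hz
      rw [uIcc_of_le (by linarith)] at hz
      exact lt_of_lt_of_le hb hz.1))
  simp only at hc
  have t1 : ‖∫ x : ℝ in (-R)..R, kern gt s t (x + (b + R : ℝ) * Complex.I)‖
      ≤ 4 / R ^ 2 * |R - (-R)| := by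
    apply intervalIntegral.norm_integral_le_of_norm_le_const
    intro x _
    apply kern_bound2 hgt.bounded s t _ _ R hR
    · left; simp; linarith
    · simp; linarith
  have t2 : ∀ r : ℝ, R = |r| → ‖∫ y : ℝ in b..(b + R), kern gt s t ((r : ℂ) + y * Complex.I)‖
      ≤ 4 / R ^ 2 * |b + R - b| := by
    intro r hr
    apply intervalIntegral.norm_integral_le_of_norm_le_const
    intro y hy
    rw [uIoc_of_le (by linarith)] at hy
    apply kern_bound2 hgt.bounded s t _ _ R hR
    · right; simpa using hr
    · simp; linarith [hy.1]
  have t3 := t2 R (abs_of_pos hR0).symm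
  have t4 := t2 (-R) (by rw [abs_neg, abs_of_pos hR0])
  rw [show R - (-R) = 2 * R by ring, abs_of_pos (by positivity)] at t1
  rw [show b + R - b = R by ring, abs_of_pos hR0] at t3 t4
  simp only [id]
  set A := ∫ x : ℝ in (-R)..R, kern gt s t (x + b * Complex.I)
  set B := ∫ x : ℝ in (-R)..R, kern gt s t (x + (b + R : ℝ) * Complex.I)
  set C := ∫ y : ℝ in b..(b + R), kern gt s t ((R : ℂ) + y * Complex.I)
  set D := ∫ y : ℝ in b..(b + R), kern gt s t (((-R : ℝ) : ℂ) + y * Complex.I)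
  have hA : A = B - Complex.I • C + Complex.I • D := by linear_combination hc
  have hn : ‖A‖ ≤ ‖B‖ + ‖C‖ + ‖D‖ := by
    rw [hA]
    refine (norm_add_le _ _).trans ?_
    have := norm_sub_le B (Complex.I • C)
    rw [norm_smul, Complex.norm_I, one_mul] at this ⊢
    linarith
  have e1 : 4 / R ^ 2 * (2 * R) = 8 / R := by field_simp; norm_num
  have e2 : 4 / R ^ 2 * R = 4 / R := by field_simp
  have e3 : 16 / R = 8 / R + 4 / R + 4 / R := by ring
  rw [e1] at t1
  rw [e2] at t3 t4
  rw [e3]; linarith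

lemma cauchy_0 {g : ℝ → ℂ} {gt : ℂ → ℂ} (hgt : HardyExt g gt) (s t : ℝ) :
    ∫ x : ℝ, (1 + Complex.I * (t - x))⁻¹ * g x * (1 + Complex.I * (s - x))⁻¹ = 0 := by
  have h : Tendsto (fun b : ℝ => ∫ x : ℝ, kern gt s t (x + b * Complex.I)) (nhdsWithin 0 (Ioi 0))
      (nhds (∫ x : ℝ, (1 + Complex.I * (t - x))⁻¹ * g x * (1 + Complex.I * (s - x))⁻¹)) := by
    refine tendsto_integral_filter_of_dominated_convergence _ ?_ ?_ (bound_int s t) ?_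
    · filter_upwards [self_mem_nhdsWithin] with b hb
      exact (kern_cont hgt s t b hb).aestronglyMeasurable
    · filter_upwards [self_mem_nhdsWithin] with b hb
      refine Eventually.of_forall fun x => ?_
      have := kern_bound hgt.bounded s t (x + b * Complex.I) (by simpa using le_of_lt hb)
      simpa using this
    · filter_upwards [hgt.boundary] with x hx
      have hd : ∀ u : ℝ, Tendsto (fun b : ℝ => (1 + Complex.I * ((u : ℂ) - (x + b * Complex.I)))⁻¹)
          (nhdsWithin 0 (Ioi 0)) (nhds (1 + Complex.I * ((u:ℂ) - x))⁻¹) := by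
        intro u
        apply Tendsto.inv₀
        · have : Continuous (fun b : ℝ => 1 + Complex.I * ((u : ℂ) - (x + b * Complex.I))) := by
            fun_prop
          have h2 := (this.tendsto 0).mono_left (nhdsWithin_le_nhds (s := Ioi 0))
          simpa using h2
        · exact den_ne u x (by simp)
      exact ((hd t).mul hx).mul (hd s)
  refine tendsto_nhds_unique h (tendsto_const_nhds.congr' ?_)
  filter_upwards [self_mem_nhdsWithin] with b hb
  exact (cauchy_b hgt s t b hb).symm

lemma mul_memLp {g : ℝ → ℂ} (hg : Measurable g) (hb : ∀ x, ‖g x‖ ≤ 1) (φ : H2) :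
    MemLp (fun x => g x * φ x) 2 volume := by
  refine (Lp.memLp φ).of_le (hg.aestronglyMeasurable.mul (Lp.aestronglyMeasurable φ))
    (Eventually.of_forall fun x => ?_)
  rw [norm_mul]
  exact mul_le_of_le_one_left (norm_nonneg _) (hb x)

lemma mulLp_coe {g : ℝ → ℂ} (hg : Measurable g) (hb : ∀ x, ‖g x‖ ≤ 1) (φ : H2) :
    (mulLp g φ : ℝ → ℂ) =ᵐ[volume] fun x => g x * φ x := by
  rw [mulLp, dif_pos (mul_memLp hg hb φ)]
  exact (mul_memLp hg hb φ).coeFn_toLp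

lemma mulLp_norm {g : ℝ → ℂ} (hg : Measurable g) (hb : ∀ x, ‖g x‖ ≤ 1) (φ : H2) :
    ‖mulLp g φ‖ ≤ ‖φ‖ := by
  apply Lp.norm_le_norm_of_ae_le
  filter_upwards [mulLp_coe hg hb φ] with x hx
  rw [hx, norm_mul]
  exact mul_le_of_le_one_left (norm_nonneg _) (hb x)

def mulL {g : ℝ → ℂ} (hg : Measurable g) (hb : ∀ x, ‖g x‖ ≤ 1) : H2 →L[ℂ] H2 :=
  LinearMap.mkContinuous
    { toFun := fun φ => mulLp g φ
      map_add' := by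
        intro φ ψ
        apply Lp.ext
        filter_upwards [mulLp_coe hg hb φ, mulLp_coe hg hb ψ, mulLp_coe hg hb (φ + ψ),
          Lp.coeFn_add φ ψ, Lp.coeFn_add (mulLp g φ) (mulLp g ψ)] with x h1 h2 h3 h4 h5
        rw [h3, h5, h4, Pi.add_apply, Pi.add_apply, h1, h2, mul_add]
      map_smul' := by
        intro c φ
        apply Lp.ext
        filter_upwards [mulLp_coe hg hb φ, mulLp_coe hg hb (c • φ),
          Lp.coeFn_smul c φ, Lp.coeFn_smul c (mulLp g φ)] with x h1 h2 h3 h4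
        simp only [RingHom.id_apply]
        rw [h2, h4, h3, Pi.smul_apply, Pi.smul_apply, h1, smul_eq_mul, smul_eq_mul]
        ring } 1 (fun φ => by simpa using mulLp_norm hg hb φ)

lemma norm_sq_H2 (f : H2) : ‖f‖ ^ 2 = ∫ x, ‖f x‖ ^ 2 := by
  have h : ((‖f‖ ^ 2 : ℝ) : ℂ) = ((∫ x, ‖f x‖ ^ 2 : ℝ) : ℂ) := by
    rw [← integral_complex_ofReal]
    have := inner_self_eq_norm_sq_to_K (𝕜 := ℂ) f
    rw [L2.inner_def] at this
    push_cast
    refine Eq.trans this.symm ?_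
    refine integral_congr_ae (Eventually.of_forall fun x => ?_)
    simp only
    rw [inner_self_eq_norm_sq_to_K]
    simp
  exact_mod_cast h

lemma sq_int (f : H2) : Integrable (fun x => ‖f x‖ ^ 2) volume :=
  (Lp.memLp f).integrable_norm_pow (by norm_num)

def SOp (𝓕 : H2 ≃ₗᵢ[ℂ] H2) {g : ℝ → ℂ} (hg : Measurable g) (hb : ∀ x, ‖g x‖ ≤ 1) :
    H2 →L[ℂ] H2 :=
  (𝓕.symm.toContinuousLinearEquiv : H2 →L[ℂ] H2) ∘L mulL hg hb ∘L
    (𝓕.toContinuousLinearEquiv : H2 →L[ℂ] H2)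

lemma SOp_apply (𝓕 : H2 ≃ₗᵢ[ℂ] H2) {g : ℝ → ℂ} (hg : Measurable g) (hb : ∀ x, ‖g x‖ ≤ 1)
    (ψ : H2) : SOp 𝓕 hg hb ψ = 𝓕.symm (mulLp g (𝓕 ψ)) := rfl

lemma S_kernel (g : ℝ → ℂ) (hg : Measurable g) (gt : ℂ → ℂ) (hgt : HardyExt g gt)
    (hb : ∀ x, ‖g x‖ ≤ 1) (𝓕 : H2 ≃ₗᵢ[ℂ] H2) (h𝓕 : IsFourier 𝓕) (s t : ℝ) :
    inner ℂ (EL wt_pos t) (SOp 𝓕 hg hb (EL wt_neg s)) = 0 := by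
  rw [SOp_apply, ← LinearIsometryEquiv.inner_map_map 𝓕, LinearIsometryEquiv.apply_symm_apply,
    L2.inner_def]
  set c : ℂ := (Real.sqrt (2 * Real.pi) : ℂ)⁻¹ with hc
  have h0 := cauchy_0 hgt s t
  have : ∫ x : ℝ, inner ℂ ((𝓕 (EL wt_pos t)) x) ((mulLp g (𝓕 (EL wt_neg s))) x)
      = ∫ x : ℝ, c ^ 2 * ((1 + Complex.I * (t - x))⁻¹ * g x * (1 + Complex.I * (s - x))⁻¹) := by
    apply integral_congr_ae
    filter_upwards [fourierE_pos 𝓕 h𝓕 t, fourierE_neg 𝓕 h𝓕 s,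
      mulLp_coe hg hb (𝓕 (EL wt_neg s))] with x h1 h2 h3
    rw [h3, h1, h2, RCLike.inner_apply, ← hc]
    have hcc : (starRingEnd ℂ) c = c := by rw [hc, map_inv₀, Complex.conj_ofReal]
    simp only [map_mul, map_inv₀, map_sub, map_one, Complex.conj_I, Complex.conj_ofReal, hcc]
    rw [show (1 : ℂ) - -Complex.I * (t - x) = 1 + Complex.I * (t - x) by ring]
    ring
  rw [this, integral_const_mul, h0, mul_zero]

lemma S_vanish (g : ℝ → ℂ) (hg : Measurable g) (gt : ℂ → ℂ) (hgt : HardyExt g gt)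
    (hb : ∀ x, ‖g x‖ ≤ 1) (𝓕 : H2 ≃ₗᵢ[ℂ] H2) (h𝓕 : IsFourier 𝓕) (ψ : H2)
    (hψ : ∀ᵐ y, y ∈ Ioi (0:ℝ) → ψ y = 0) :
    ∀ᵐ y, y ∈ Ioi (0:ℝ) → SOp 𝓕 hg hb ψ y = 0 := by
  have h := density 𝓕 h𝓕 wt_pos (SOp 𝓕 hg hb ψ) ?_
  · filter_upwards [h] with y hy hy0
    rw [indicator_of_mem hy0] at hy
    exact (mul_eq_zero.1 hy).resolve_left (by exact_mod_cast (Real.exp_pos _).ne')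
  intro t
  rw [← ContinuousLinearMap.adjoint_inner_left]
  set k := ContinuousLinearMap.adjoint (SOp 𝓕 hg hb) (EL wt_pos t) with hk
  have h2 := density 𝓕 h𝓕 wt_neg k (by
    intro s
    rw [hk, ContinuousLinearMap.adjoint_inner_right, ← inner_conj_symm,
      S_kernel g hg gt hgt hb 𝓕 h𝓕 s t, map_zero])
  rw [L2.inner_def]
  refine integral_eq_zero_of_ae ?_
  filter_upwards [h2, hψ] with y h2 h3
  by_cases hy : y ∈ Ioi (0:ℝ)
  · rw [h3 hy]; simp
  · have hy' : y ∈ Iic (0:ℝ) := by simpa using hy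
    rw [indicator_of_mem hy'] at h2
    rw [(mul_eq_zero.1 h2).resolve_left (by exact_mod_cast (Real.exp_pos _).ne')]
    simp

/-- If a measurable `g : ℝ → ℂ` has an extension to the closed upper
half-plane, analytic on the open half-plane, bounded by one, with boundary values `g` a.e.,
then `g(M)* P̂₊ g(M) ≤ P̂₊`, i.e. for every `φ ∈ L²(ℝ)`,
`∫_{[0,∞)} |(F*(g·φ))(y)|² dy ≤ ∫_{[0,∞)} |(F*φ)(y)|² dy`. -/
theorem statement0 (g : ℝ → ℂ) (hg : Measurable g) (gt : ℂ → ℂ) (hgt : HardyExt g gt)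
    (𝓕 : H2 ≃ₗᵢ[ℂ] H2) (h𝓕 : IsFourier 𝓕) (φ : H2) :
    ∫ y in Set.Ici (0 : ℝ), ‖(𝓕.symm (mulLp g φ)) y‖ ^ 2 ≤
      ∫ y in Set.Ici (0 : ℝ), ‖(𝓕.symm φ) y‖ ^ 2 := by
  have hb : ∀ x, ‖g x‖ ≤ 1 := fun x => by
    rw [← hgt.agree]; exact hgt.bounded _ (by simp)
  rw [integral_Ici_eq_integral_Ioi, integral_Ici_eq_integral_Ioi]
  set ψ := 𝓕.symm φ with hψ
  have e : 𝓕.symm (mulLp g φ) = SOp 𝓕 hg hb ψ := by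
    rw [SOp_apply, hψ, LinearIsometryEquiv.apply_symm_apply]
  rw [e]
  have hm : MemLp ((Ioi (0:ℝ)).indicator ψ) 2 volume := (Lp.memLp ψ).indicator measurableSet_Ioi
  set p : H2 := hm.toLp _ with hp
  have hpc : (p : ℝ → ℂ) =ᵐ[volume] (Ioi (0:ℝ)).indicator ψ := hm.coeFn_toLp
  have hv := S_vanish g hg gt hgt hb 𝓕 h𝓕 (ψ - p) (by
    filter_upwards [hpc, Lp.coeFn_sub ψ p] with y h1 h2 hy
    rw [h2, Pi.sub_apply, h1, indicator_of_mem hy, sub_self])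
  have h1 : ∫ y in Ioi (0 : ℝ), ‖SOp 𝓕 hg hb ψ y‖ ^ 2 = ∫ y in Ioi (0 : ℝ), ‖SOp 𝓕 hg hb p y‖ ^ 2 := by
    apply setIntegral_congr_ae measurableSet_Ioi
    rw [map_sub] at hv
    filter_upwards [hv, Lp.coeFn_sub (SOp 𝓕 hg hb ψ) (SOp 𝓕 hg hb p)] with y h1 h2 hy
    have := h1 hy
    rw [h2, Pi.sub_apply, sub_eq_zero] at this
    rw [this]
  rw [h1]
  calc _ ≤ ∫ y, ‖SOp 𝓕 hg hb p y‖ ^ 2 :=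
        setIntegral_le_integral (sq_int _) (Eventually.of_forall fun y => by positivity)
    _ = ‖SOp 𝓕 hg hb p‖ ^ 2 := (norm_sq_H2 _).symm
    _ ≤ ‖p‖ ^ 2 := by
        have : ‖SOp 𝓕 hg hb p‖ ≤ ‖p‖ := by
          rw [SOp_apply, LinearIsometryEquiv.norm_map]
          refine (mulLp_norm hg hb _).trans ?_
          rw [LinearIsometryEquiv.norm_map]
        gcongr
    _ = ∫ y, ‖p y‖ ^ 2 := norm_sq_H2 _
    _ = _ := by
        rw [← integral_indicator measurableSet_Ioi]
        apply integral_congr_ae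
        filter_upwards [hpc] with y hy
        rw [hy]
        by_cases h : y ∈ Ioi (0:ℝ)
        · rw [indicator_of_mem h, indicator_of_mem h]
        · rw [indicator_of_notMem h, indicator_of_notMem h]; simp
end
end

section
/- Let g : ℝ → ℂ be a measurable function admitting an extension g̃ : {ω ∈ ℂ : Im ω ≥ 0} → ℂ such that (i) g̃ is analytic on the open upper half-plane {ω : Im ω > 0}; (ii) |g̃(ω)| ≤ 1 for all ω with Im ω ≥ 0; (iii) lim_{b→0+} g̃(a+ib) = g(a) for Lebesgue-almost all a ∈ ℝ. Then multiplication by g leaves invariant the subspace of negative-frequency functions: if φ ∈ L²(ℝ) and (F*φ)(y) = 0 for almost all y > 0, then (F*(g·φ))(y) = 0 for almost all y > 0. -/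
open MeasureTheory Complex Filter Set

noncomputable section

theorem aux_zero (w : H2) (U : Set ℝ) (hU : IsOpen U) (hc : U.OrdConnected)
    (h : ∀ a b : ℝ, a ∈ U → b ∈ U → a ≤ b → ∫ x in Ioc a b, w x = 0) :
    ∀ᵐ y ∂(volume.restrict U), w y = 0 := by
  rw [ae_restrict_iff' hU.measurableSet]
  have hl : LocallyIntegrable (⇑w) volume := (Lp.memLp w).locallyIntegrable (by norm_num)
  filter_upwards [LocallyIntegrable.ae_hasDerivAt_integral hl] with x hx hxU
  have h1 := hx x
  have h2 : HasDerivAt (fun _ : ℝ => (0 : ℂ)) 0 x := hasDerivAt_const _ _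
  refine h1.unique (h2.congr_of_eventuallyEq ?_)
  filter_upwards [hU.mem_nhds hxU] with y hy
  rcases le_total x y with hxy | hxy
  · rw [intervalIntegral.integral_of_le hxy, h x y hxU hy hxy]
  · rw [intervalIntegral.integral_of_ge hxy, h y x hy hxU hxy, neg_zero]

theorem aux_contour (f : ℂ → ℂ) (f0 : ℝ → ℂ) (K : ℝ)
    (hf : DifferentiableOn ℂ f {ω : ℂ | 0 < ω.im})
    (hK : ∀ ω : ℂ, 0 < ω.im → ‖f ω‖ ≤ K * (1 + ‖ω‖ ^ 2)⁻¹)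
    (hb : ∀ᵐ a : ℝ ∂volume,
      Tendsto (fun b : ℝ => f ((a : ℂ) + b * Complex.I)) (nhdsWithin 0 (Ioi 0)) (nhds (f0 a))) :
    ∫ x, f0 x = 0 := by
  have hK0 : 0 ≤ K := by
    have := (norm_nonneg _).trans (hK I (by simp))
    simp at this; linarith
  have hns : ∀ a b : ℝ, ‖(a : ℂ) + b * I‖ ^ 2 = a ^ 2 + b ^ 2 := by
    intro a b
    rw [Complex.sq_norm, Complex.normSq_add_mul_I]
  have hbd : ∀ a b : ℝ, 0 < b → ‖f (a + b * I)‖ ≤ K * (1 + a ^ 2)⁻¹ := by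
    intro a b hb
    refine (hK _ (by simpa using hb)).trans ?_
    rw [hns]
    gcongr
    nlinarith [sq_nonneg b]
  have hbd2 : ∀ a b : ℝ, 0 < b → ‖f (a + b * I)‖ ≤ K * (1 + b ^ 2)⁻¹ := by
    intro a b hb
    refine (hK _ (by simpa using hb)).trans ?_
    rw [hns]
    gcongr
    nlinarith [sq_nonneg a]
  have hcont : ∀ b : ℝ, 0 < b → Continuous (fun a : ℝ => f (a + b * I)) := by
    intro b hb
    refine hf.continuousOn.comp_continuous (by fun_prop) ?_
    intro x; simpa using hb
  have hKi : Integrable (fun x : ℝ => K * (1 + x ^ 2)⁻¹) := integrable_inv_one_add_sq.const_mul K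
  have hint : ∀ b : ℝ, 0 < b → Integrable (fun a : ℝ => f (a + b * I)) := fun b hb =>
    hKi.mono' (hcont b hb).aestronglyMeasurable (Eventually.of_forall fun a => hbd a b hb)
  have hinv : Tendsto (fun R : ℝ => K * (1 + R ^ 2)⁻¹) atTop (nhds 0) := by
    have : Tendsto (fun R : ℝ => 1 + R ^ 2) atTop atTop :=
      tendsto_atTop_add_const_left _ _ (tendsto_pow_atTop (by norm_num))
    simpa using this.inv_tendsto_atTop.const_mul K
  have hconst : ∀ b c : ℝ, 0 < b → b ≤ c →
      ∫ a : ℝ, f (a + b * I) = ∫ a : ℝ, f (a + c * I) := by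
    intro b c hb hbc
    have hc : 0 < c := hb.trans_le hbc
    have t1 := intervalIntegral_tendsto_integral (hint b hb) tendsto_neg_atTop_atBot tendsto_id
    have t2 := intervalIntegral_tendsto_integral (hint c hc) tendsto_neg_atTop_atBot tendsto_id
    have side : ∀ R : ℝ, ‖∫ y in b..c, f ((R : ℂ) + y * I)‖ ≤ K * (1 + R ^ 2)⁻¹ * |c - b| := by
      intro R
      refine intervalIntegral.norm_integral_le_of_norm_le_const ?_
      intro y hy
      rw [uIoc_of_le hbc] at hy
      exact hbd R y (hb.trans hy.1)
    have t3 : Tendsto (fun R : ℝ => (∫ x in (-R)..R, f ((x : ℂ) + b * I))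
        - ∫ x in (-R)..R, f ((x : ℂ) + c * I)) atTop (nhds 0) := by
      refine squeeze_zero_norm (a := fun R : ℝ => 2 * (K * (1 + R ^ 2)⁻¹ * |c - b|)) ?_ ?_
      · intro R
        have H := Complex.integral_boundary_rect_eq_zero_of_differentiableOn f
          ((-R : ℝ) + b * I) ((R : ℝ) + c * I) (hf.mono ?_)
        · simp only [add_re, ofReal_re, mul_re, I_re, I_im, ofReal_im, add_im, mul_im, mul_zero,
            mul_one, sub_self, add_zero, zero_add, sub_zero] at H
          have e : (∫ x in (-R)..R, f ((x : ℂ) + b * I))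
              - ∫ x in (-R)..R, f ((x : ℂ) + c * I)
              = I • (∫ y in b..c, f (((-R : ℝ) : ℂ) + y * I))
                - I • ∫ y in b..c, f ((R : ℂ) + y * I) := by
            linear_combination H
          rw [e]
          refine (norm_sub_le _ _).trans ?_
          rw [norm_smul, norm_smul, norm_I, one_mul, one_mul]
          have s1 := side (-R)
          have s2 := side R
          rw [neg_sq] at s1
          linarith
        · intro z hz
          have := hz.2
          simp [uIcc_of_le hbc] at this
          exact hb.trans_le this.1
      · simpa using (hinv.mul_const |c - b|).const_mul 2
    have t4 := tendsto_nhds_unique (t1.sub t2) t3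
    exact sub_eq_zero.mp t4
  have hlim : Tendsto (fun b : ℝ => ∫ a : ℝ, f (a + b * I)) atTop (nhds 0) := by
    have := tendsto_integral_filter_of_dominated_convergence (l := (atTop : Filter ℝ))
      (F := fun b : ℝ => fun a : ℝ => f (a + b * I)) (f := fun _ : ℝ => (0 : ℂ)) (μ := volume)
      (fun x : ℝ => K * (1 + x ^ 2)⁻¹)
      (by filter_upwards [eventually_gt_atTop 0] with b hb
          exact (hcont b hb).aestronglyMeasurable)
      (by filter_upwards [eventually_gt_atTop 0] with b hb
          exact Eventually.of_forall fun a => hbd a b hb) hKi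
      (Eventually.of_forall fun a => by
        refine squeeze_zero_norm' ?_ hinv
        filter_upwards [eventually_gt_atTop 0] with b hb
        exact hbd2 a b hb)
    simpa using this
  have hz : ∀ b : ℝ, 0 < b → ∫ a : ℝ, f (a + b * I) = 0 := by
    intro b hb
    refine tendsto_nhds_unique (tendsto_const_nhds.congr' ?_) hlim
    filter_upwards [eventually_ge_atTop b] with c hc
    exact hconst b c hb hc
  have := tendsto_integral_filter_of_dominated_convergence (l := nhdsWithin (0 : ℝ) (Ioi 0))
      (F := fun b : ℝ => fun a : ℝ => f (a + b * I)) (f := f0) (μ := volume)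
      (fun x : ℝ => K * (1 + x ^ 2)⁻¹)
      (by filter_upwards [self_mem_nhdsWithin] with b hb
          exact (hcont b hb).aestronglyMeasurable)
      (by filter_upwards [self_mem_nhdsWithin] with b hb
          exact Eventually.of_forall fun a => hbd a b hb) hKi hb
  refine tendsto_nhds_unique this (tendsto_const_nhds.congr' ?_)
  filter_upwards [self_mem_nhdsWithin] with b hb
  exact (hz b hb).symm

/-- explicit Fourier integral -/
def EE (p q : ℝ) (z : ℂ) : ℂ := ∫ y in p..q, Complex.exp (I * z * y)

theorem EE_eq (p q : ℝ) {z : ℂ} (hz : z ≠ 0) :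
    EE p q z = (Complex.exp (I * z * q) - Complex.exp (I * z * p)) / (I * z) :=
  integral_exp_mul_complex (mul_ne_zero I_ne_zero hz)

theorem exp_bd (p : ℝ) (hp : 0 ≤ p) (z : ℂ) (hz : 0 ≤ z.im) : ‖Complex.exp (I * z * p)‖ ≤ 1 := by
  rw [Complex.norm_exp, Real.exp_le_one_iff]
  simp
  positivity

theorem EE_bd1 (p q : ℝ) (hp : 0 ≤ p) (hpq : p ≤ q) (z : ℂ) (hz : 0 ≤ z.im) :
    ‖EE p q z‖ ≤ q - p := by
  have := intervalIntegral.norm_integral_le_of_norm_le_const (a := p) (b := q) (C := 1)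
    (f := fun y : ℝ => Complex.exp (I * z * y)) (by
      intro y hy
      rw [uIoc_of_le hpq] at hy
      exact exp_bd y (hp.trans hy.1.le) z hz)
  rwa [one_mul, abs_of_nonneg (by linarith)] at this

theorem EE_bd2 (p q : ℝ) (hp : 0 ≤ p) (hpq : p ≤ q) (z : ℂ) (hz : 0 ≤ z.im) :
    ‖z‖ * ‖EE p q z‖ ≤ 2 := by
  by_cases h : z = 0
  · simp [h]
  rw [EE_eq p q h, norm_div, norm_mul, norm_I, one_mul, mul_div_cancel₀ _ (norm_ne_zero_iff.mpr h)]
  refine (norm_sub_le _ _).trans ?_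
  linarith [exp_bd p hp z hz, exp_bd q (hp.trans hpq) z hz]

theorem EE_diff (p q : ℝ) {z : ℂ} (hz : z ≠ 0) : DifferentiableAt ℂ (EE p q) z := by
  have h : DifferentiableAt ℂ
      (fun z : ℂ => (Complex.exp (I * z * q) - Complex.exp (I * z * p)) / (I * z)) z := by
    refine DifferentiableAt.div (by fun_prop) (by fun_prop) (mul_ne_zero I_ne_zero hz)
  refine h.congr_of_eventuallyEq ?_
  filter_upwards [isOpen_ne.mem_nhds hz] with w hw
  exact EE_eq p q hw

theorem aux_int (g : ℝ → ℂ) (gt : ℂ → ℂ) (hgt : HardyExt g gt) (p q p' q' : ℝ)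
    (hp : 0 ≤ p) (hpq : p ≤ q) (hp' : 0 ≤ p') (hpq' : p' ≤ q') :
    ∫ x : ℝ, g x * (EE p q x * EE p' q' x) = 0 := by
  have ne : ∀ z : ℂ, 0 < z.im → z ≠ 0 := by
    rintro z hz rfl
    simp at hz
  refine aux_contour (fun z => gt z * (EE p q z * EE p' q' z)) _ ((q - p) * (q' - p') + 2 * 2)
    ?_ ?_ ?_
  · refine hgt.analytic.mul (DifferentiableOn.mul ?_ ?_)
    · intro z hz
      exact (EE_diff p q (ne z hz)).differentiableWithinAt
    · intro z hz
      exact (EE_diff p' q' (ne z hz)).differentiableWithinAt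
  · intro z hz
    have hz' := le_of_lt hz
    rw [← div_eq_mul_inv, le_div_iff₀ (by positivity), norm_mul, norm_mul]
    have h0 := hgt.bounded z hz'
    have h1 := EE_bd1 p q hp hpq z hz'
    have h2 := EE_bd2 p q hp hpq z hz'
    have h3 := EE_bd1 p' q' hp' hpq' z hz'
    have h4 := EE_bd2 p' q' hp' hpq' z hz'
    have h5 : ‖EE p q z‖ * ‖EE p' q' z‖ ≤ (q - p) * (q' - p') := by gcongr
    have h6 : (‖z‖ * ‖EE p q z‖) * (‖z‖ * ‖EE p' q' z‖) ≤ 2 * 2 := by gcongr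
    calc _ = ‖gt z‖ * (‖EE p q z‖ * ‖EE p' q' z‖ + (‖z‖ * ‖EE p q z‖) * (‖z‖ * ‖EE p' q' z‖)) := by
            ring
      _ ≤ 1 * ((q - p) * (q' - p') + 2 * 2) := by gcongr
      _ = _ := one_mul _
  · have h0 : ∀ᵐ a : ℝ ∂volume, a ≠ 0 := by
      simp [ae_iff]
    filter_upwards [hgt.boundary, h0] with a ha ha0
    have hc : Tendsto (fun b : ℝ => (a : ℂ) + b * I) (nhdsWithin 0 (Ioi 0)) (nhds (a : ℂ)) := by
      have : Continuous (fun b : ℝ => (a : ℂ) + b * I) := by fun_prop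
      have := this.tendsto 0
      simp only [ofReal_zero, zero_mul, add_zero] at this
      exact this.mono_left nhdsWithin_le_nhds
    have ha0' : (a : ℂ) ≠ 0 := by exact_mod_cast ha0
    exact ha.mul (((EE_diff p q ha0').continuousAt.tendsto.comp hc).mul
      ((EE_diff p' q' ha0').continuousAt.tendsto.comp hc))

/-- indicator of an interval as an element of L2 -/
def chi (a b : ℝ) : H2 :=
  indicatorConstLp 2 (measurableSet_Ioc : MeasurableSet (Ioc a b)) (by simp) (1 : ℂ)

theorem F_chi (𝓕 : H2 ≃ₗᵢ[ℂ] H2) (h𝓕 : IsFourier 𝓕) (a b : ℝ) (hab : a ≤ b) :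
    (⇑(𝓕 (chi a b)) : ℝ → ℂ) =ᵐ[volume]
      fun x : ℝ => (Real.sqrt (2 * Real.pi) : ℂ)⁻¹ * EE (-b) (-a) x := by
  have hchi : (⇑(chi a b) : ℝ → ℂ) =ᵐ[volume] (Ioc a b).indicator (fun _ => (1 : ℂ)) :=
    indicatorConstLp_coeFn
  have hi : Integrable (⇑(chi a b)) volume := integrable_indicatorConstLp _ _ _
  filter_upwards [h𝓕.1 _ hi] with x hx
  rw [hx]
  congr 1
  have e1 : ∫ y : ℝ, Complex.exp (-(I * x * y)) * chi a b y
      = ∫ y : ℝ, (Ioc a b).indicator (fun y : ℝ => Complex.exp (-(I * x * y))) y := by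
    refine integral_congr_ae ?_
    filter_upwards [hchi] with y hy
    rw [hy]
    by_cases h : y ∈ Ioc a b <;> simp [h]
  rw [e1, integral_indicator measurableSet_Ioc, ← intervalIntegral.integral_of_le hab, EE,
    ← intervalIntegral.integral_comp_neg]
  simp

theorem EE_conj (a b : ℝ) (x : ℝ) :
    (starRingEnd ℂ) (EE (-b) (-a) x) = EE a b x := by
  unfold EE
  rw [← intervalIntegral.integral_comp_neg, intervalIntegral, intervalIntegral, map_sub, ← integral_conj, ← integral_conj]
  congr 1 <;> refine integral_congr_ae (Eventually.of_forall fun y => ?_)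
  all_goals simp only
  all_goals (rw [← Complex.exp_conj]; simp)

theorem mulLp_ae (g : ℝ → ℂ) (hg : Measurable g) (hb : ∀ x, ‖g x‖ ≤ 1) (φ : H2) :
    (⇑(mulLp g φ) : ℝ → ℂ) =ᵐ[volume] fun x => g x * φ x := by
  have h : MemLp (fun x => g x * φ x) 2 volume := by
    refine (Lp.memLp φ).mono (hg.aestronglyMeasurable.mul (Lp.aestronglyMeasurable φ)) ?_
    refine Eventually.of_forall fun x => ?_
    rw [norm_mul]
    exact mul_le_of_le_one_left (norm_nonneg _) (hb x)
  unfold mulLp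
  rw [dif_pos h]
  exact h.coeFn_toLp

/-- If a measurable `g : ℝ → ℂ` has an extension to the closed upper
half-plane, analytic on the open half-plane, bounded by one, with boundary values `g` a.e.,
then multiplication by `g` leaves the subspace of negative-frequency functions invariant:
if `(F*φ)(y) = 0` for a.e. `y > 0` then `(F*(g·φ))(y) = 0` for a.e. `y > 0`. -/
theorem statement1 (g : ℝ → ℂ) (hg : Measurable g) (gt : ℂ → ℂ) (hgt : HardyExt g gt)
    (𝓕 : H2 ≃ₗᵢ[ℂ] H2) (h𝓕 : IsFourier 𝓕) (φ : H2)
    (hφ : ∀ᵐ y ∂(volume.restrict (Set.Ioi (0 : ℝ))), (𝓕.symm φ) y = 0) :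
    ∀ᵐ y ∂(volume.restrict (Set.Ioi (0 : ℝ))), (𝓕.symm (mulLp g φ)) y = 0 := by
  have hb : ∀ x, ‖g x‖ ≤ 1 := fun x => by
    rw [← hgt.agree]
    exact hgt.bounded _ (by simp)
  have hgc : Measurable (fun x => (starRingEnd ℂ) (g x)) :=
    Complex.continuous_conj.measurable.comp hg
  have hbc : ∀ x, ‖(starRingEnd ℂ) (g x)‖ ≤ 1 := fun x => by simpa using hb x
  have hadj : ∀ u v : H2, inner ℂ u (mulLp g v)
      = inner ℂ (mulLp (fun x => (starRingEnd ℂ) (g x)) u) v := by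
    intro u v
    rw [L2.inner_def, L2.inner_def]
    refine integral_congr_ae ?_
    filter_upwards [mulLp_ae g hg hb v, mulLp_ae _ hgc hbc u] with x h1 h2
    rw [h1, h2]
    simp only [RCLike.inner_apply, map_mul, conj_conj]
    ring
  refine aux_zero _ _ isOpen_Ioi ordConnected_Ioi fun a b ha hb' hab => ?_
  have step : inner ℂ (chi a b) (𝓕.symm (mulLp g φ)) = 0 := by
    rw [← 𝓕.inner_map_map, 𝓕.apply_symm_apply, hadj, ← 𝓕.symm.inner_map_map]
    set u := 𝓕.symm (mulLp (fun x => (starRingEnd ℂ) (g x)) (𝓕 (chi a b))) with hu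
    have hu0 : ∀ᵐ y ∂(volume.restrict (Iio (0 : ℝ))), u y = 0 := by
      refine aux_zero _ _ isOpen_Iio ordConnected_Iio fun c d hc hd hcd => ?_
      have : inner ℂ u (chi c d) = 0 := by
        rw [← 𝓕.inner_map_map, hu, 𝓕.apply_symm_apply, ← hadj, L2.inner_def]
        have key := aux_int g gt hgt a b (-d) (-c) (le_of_lt ha) hab
          (by simpa using le_of_lt hd) (by simpa using hcd)
        have : ∫ x : ℝ, inner ℂ ((𝓕 (chi a b)) x) ((mulLp g (𝓕 (chi c d))) x)
            = ∫ x : ℝ, ((Real.sqrt (2 * Real.pi) : ℂ)⁻¹ * (Real.sqrt (2 * Real.pi) : ℂ)⁻¹) *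
              (g x * (EE a b x * EE (-d) (-c) x)) := by
          refine integral_congr_ae ?_
          filter_upwards [mulLp_ae g hg hb (𝓕 (chi c d)), F_chi 𝓕 h𝓕 a b hab,
            F_chi 𝓕 h𝓕 c d hcd] with x h1 h2 h3
          rw [h1, h2, h3]
          simp only [RCLike.inner_apply, map_mul, EE_conj, map_inv₀, conj_ofReal]
          ring
        rw [this, integral_const_mul, key, mul_zero]
      rw [← inner_conj_symm, map_eq_zero] at this
      rw [← this]
      exact (L2.inner_indicatorConstLp_one _ _ _).symm
    rw [L2.inner_def]
    rw [ae_restrict_iff' measurableSet_Iio] at hu0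
    rw [ae_restrict_iff' measurableSet_Ioi] at hφ
    have h0 : ∀ᵐ a : ℝ ∂volume, a ≠ 0 := by
      simp [ae_iff]
    refine integral_eq_zero_of_ae ?_
    filter_upwards [hu0, hφ, h0] with x h1 h2 h3
    rcases lt_or_gt_of_ne h3 with h | h
    · simp [h1 h]
    · simp [h2 h]
  rw [← step]
  exact (L2.inner_indicatorConstLp_one _ _ _).symm
end
end

section
/- Let f ∈ L²(ℝ) vanish almost everywhere on (−∞,0). Define h(ω) := (2π)^{-1/2} ∫_{[0,∞)} e^{iωy} f(y) dy for ω in the open upper half-plane {ω ∈ ℂ : Im ω > 0} (the integral converges absolutely since y ↦ e^{-Im(ω)·y} is square integrable on [0,∞)). Then: (a) h is analytic on {Im ω > 0}; (b) for every b > 0, ∫_ℝ |h(a+ib)|² da ≤ ∫_ℝ |f(y)|² dy; (c) the functions h_b(a) := h(a+ib) converge in L²(ℝ) to F*f as b → 0+. -/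
open MeasureTheory Complex Filter Set
open scoped ENNReal NNReal

noncomputable section

lemma aux_memLp_exp (b : ℝ) (hb : 0 < b) :
    MemLp (fun y : ℝ => Real.exp (-b * y)) 2 (volume.restrict (Ici (0 : ℝ))) := by
  rw [memLp_two_iff_integrable_sq (by fun_prop)]
  have h1 : IntegrableOn (fun y : ℝ => Real.exp (-(2 * b) * y)) (Ici 0) := by
    rw [integrableOn_Ici_iff_integrableOn_Ioi]
    exact exp_neg_integrableOn_Ioi 0 (by positivity)
  refine h1.congr (Eventually.of_forall fun y => ?_)
  simp only
  rw [← Real.exp_nat_mul]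
  congr 1
  push_cast
  ring

lemma aux_integrable (f : H2) (b : ℝ) (hb : 0 < b) :
    Integrable (fun y : ℝ => Real.exp (-b * y) * ‖f y‖) (volume.restrict (Ici (0 : ℝ))) :=
  (aux_memLp_exp b hb).integrable_mul (((Lp.memLp f).restrict _).norm)

lemma aux_norm_exp (ω : ℂ) (y : ℝ) :
    ‖Complex.exp (Complex.I * ω * y)‖ = Real.exp (-ω.im * y) := by
  rw [Complex.norm_exp]
  simp

lemma aux_diff (f : H2) (ω₀ : ℂ) (hω : 0 < ω₀.im) :
    DifferentiableAt ℂ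
      (fun ω : ℂ => ∫ y in Set.Ici (0 : ℝ), Complex.exp (Complex.I * ω * y) * f y) ω₀ := by
  obtain ⟨c, hc, hc4⟩ : ∃ c : ℝ, 0 < c ∧ ω₀.im = 4 * c := ⟨ω₀.im / 4, by positivity, by ring⟩
  have hfm : AEStronglyMeasurable (⇑f) (volume.restrict (Ici (0 : ℝ))) :=
    ((Lp.memLp f).restrict _).aestronglyMeasurable
  have key := hasDerivAt_integral_of_dominated_loc_of_deriv_le
    (μ := volume.restrict (Ici (0 : ℝ))) (𝕜 := ℂ)
    (F := fun (ω : ℂ) (y : ℝ) => Complex.exp (Complex.I * ω * y) * f y)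
    (F' := fun (ω : ℂ) (y : ℝ) => (Complex.exp (Complex.I * ω * y) * (Complex.I * y)) * f y)
    (x₀ := ω₀) (s := Metric.ball ω₀ (2 * c))
    (bound := fun y => c⁻¹ * (Real.exp (-c * y) * ‖f y‖))
    (Metric.ball_mem_nhds _ (by positivity)) ?_ ?_ ?_ ?_ ?_ ?_
  · exact key.2.differentiableAt
  · refine Eventually.of_forall fun ω => ?_
    exact AEStronglyMeasurable.mul (by fun_prop) hfm
  · refine (aux_integrable f ω₀.im hω).mono' (AEStronglyMeasurable.mul (by fun_prop) hfm) ?_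
    refine Eventually.of_forall fun y => ?_
    rw [norm_mul, aux_norm_exp]
  · exact AEStronglyMeasurable.mul (by fun_prop) hfm
  · refine (ae_restrict_iff' measurableSet_Ici).2 (Eventually.of_forall fun y hy ω hω' => ?_)
    have hy0 : 0 ≤ y := hy
    rw [norm_mul, norm_mul, aux_norm_exp, norm_mul, Complex.norm_I, one_mul, Complex.norm_real,
      Real.norm_of_nonneg hy0, ← mul_assoc]
    refine mul_le_mul_of_nonneg_right ?_ (norm_nonneg _)
    have him : 2 * c ≤ ω.im := by
      have h1 : ‖ω - ω₀‖ < 2 * c := by simpa [dist_eq_norm] using hω'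
      have h2 := Complex.abs_im_le_norm (ω - ω₀)
      rw [Complex.sub_im] at h2
      have h3 := (abs_le.1 (h2.trans h1.le)).1
      linarith
    have h1 : Real.exp (-ω.im * y) ≤ Real.exp (-c * y) * Real.exp (-c * y) := by
      rw [← Real.exp_add]
      apply Real.exp_le_exp.2
      nlinarith
    have h2 : y ≤ c⁻¹ * Real.exp (c * y) := by
      rw [le_inv_mul_iff₀ hc]
      linarith [Real.add_one_le_exp (c * y)]
    have h3 : Real.exp (-c * y) * Real.exp (c * y) = 1 := by
      rw [← Real.exp_add]; simp
    calc Real.exp (-ω.im * y) * y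
        ≤ (Real.exp (-c * y) * Real.exp (-c * y)) * (c⁻¹ * Real.exp (c * y)) := by gcongr
      _ = c⁻¹ * Real.exp (-c * y) * (Real.exp (-c * y) * Real.exp (c * y)) := by ring
      _ = _ := by rw [h3, mul_one]
  · exact (aux_integrable f c hc).const_mul _
  · refine Eventually.of_forall fun y ω _ => ?_
    refine HasDerivAt.mul_const ?_ _
    have h1 : HasDerivAt (fun ω : ℂ => Complex.I * ω * y) (Complex.I * y) ω := by
      simpa using ((hasDerivAt_id ω).const_mul Complex.I).mul_const (y : ℂ)
    exact h1.cexp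

/-- damped function -/
def auxG (f : H2) (b : ℝ) : ℝ → ℂ :=
  (Ici (0 : ℝ)).indicator (fun y => (Real.exp (-b * y) : ℂ) * f y)

lemma auxG_meas (f : H2) (b : ℝ) : AEStronglyMeasurable (auxG f b) volume :=
  (AEStronglyMeasurable.mul (by fun_prop) (Lp.memLp f).aestronglyMeasurable).indicator
    measurableSet_Ici

lemma auxG_le (f : H2) (b : ℝ) (hb : 0 < b) (y : ℝ) : ‖auxG f b y‖ ≤ ‖f y‖ := by
  unfold auxG
  by_cases hy : y ∈ Ici (0 : ℝ)
  · rw [indicator_of_mem hy, norm_mul, Complex.norm_real, Real.norm_of_nonneg (Real.exp_pos _).le]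
    have hy0 : 0 ≤ y := hy
    have : Real.exp (-b * y) ≤ 1 := Real.exp_le_one_iff.2 (by nlinarith)
    exact mul_le_of_le_one_left (norm_nonneg _) this
  · rw [indicator_of_notMem hy]; simp

lemma auxG_memLp (f : H2) (b : ℝ) (hb : 0 < b) : MemLp (auxG f b) 2 volume :=
  (Lp.memLp f).mono (auxG_meas f b) (Eventually.of_forall (auxG_le f b hb))

lemma auxG_integrable (f : H2) (b : ℝ) (hb : 0 < b) : Integrable (auxG f b) volume := by
  unfold auxG
  rw [integrable_indicator_iff measurableSet_Ici]
  refine (aux_integrable f b hb).mono' ?_ (Eventually.of_forall fun y => ?_)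
  · exact AEStronglyMeasurable.mul (by fun_prop) ((Lp.memLp f).restrict _).aestronglyMeasurable
  · rw [norm_mul, Complex.norm_real, Real.norm_of_nonneg (Real.exp_pos _).le]

lemma aux_ae (𝓕 : H2 ≃ₗᵢ[ℂ] H2) (h𝓕 : IsFourier 𝓕) (f : H2) (h : ℂ → ℂ)
    (hh : ∀ ω : ℂ, 0 < ω.im →
      h ω = (Real.sqrt (2 * Real.pi) : ℂ)⁻¹ *
        ∫ y in Set.Ici (0 : ℝ), Complex.exp (Complex.I * ω * y) * f y) (b : ℝ) (hb : 0 < b) :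
    (fun a : ℝ => h ((a : ℂ) + (b : ℂ) * Complex.I)) =ᵐ[volume]
      ⇑(𝓕.symm ((auxG_memLp f b hb).toLp _)) := by
  have hco := (auxG_memLp f b hb).coeFn_toLp
  have h1 := h𝓕.2 ((auxG_memLp f b hb).toLp _) ((integrable_congr hco).2 (auxG_integrable f b hb))
  refine EventuallyEq.trans (Eventually.of_forall fun a => ?_) h1.symm
  simp only
  rw [hh _ (by simpa using hb)]
  congr 1
  have h2 : ∫ x : ℝ, Complex.exp (Complex.I * a * x) * ((auxG_memLp f b hb).toLp _) x =
      ∫ x : ℝ, (Ici (0 : ℝ)).indicator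
        (fun y : ℝ => Complex.exp (Complex.I * ((a : ℂ) + (b : ℂ) * Complex.I) * y) * f y) x := by
    refine integral_congr_ae ?_
    filter_upwards [hco] with x hx
    rw [hx]
    unfold auxG
    by_cases hy : x ∈ Ici (0 : ℝ)
    · rw [indicator_of_mem hy, indicator_of_mem hy, ← mul_assoc, Complex.ofReal_exp,
        ← Complex.exp_add]
      congr 2
      push_cast
      linear_combination (-(b : ℂ) * x) * Complex.I_mul_I
    · rw [indicator_of_notMem hy, indicator_of_notMem hy, mul_zero]
  rw [h2, integral_indicator measurableSet_Ici]

lemma aux_sq (g : ℝ → ℂ) :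
    eLpNorm g 2 volume = (∫⁻ a : ℝ, (‖g a‖₊ : ℝ≥0∞) ^ 2) ^ (1 / 2 : ℝ) := by
  rw [eLpNorm_eq_lintegral_rpow_enorm_toReal (by norm_num) (by norm_num)]
  simp [enorm]

lemma aux_iso (𝓕 : H2 ≃ₗᵢ[ℂ] H2) (u : H2) :
    eLpNorm (⇑(𝓕.symm u)) 2 volume = eLpNorm (⇑u) 2 volume := by
  have := 𝓕.symm.norm_map u
  rw [Lp.norm_def, Lp.norm_def] at this
  exact (ENNReal.toReal_eq_toReal_iff' (Lp.eLpNorm_ne_top _) (Lp.eLpNorm_ne_top _)).1 this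

/-- For `f ∈ L²(ℝ)` vanishing a.e. on `(-∞,0)`, the function
`h(ω) := (2π)^{-1/2} ∫_{[0,∞)} e^{iωy} f(y) dy` on the open upper half-plane is
(a) analytic there; (b) satisfies `∫ |h(a+ib)|² da ≤ ∫ |f|²` for every `b > 0`; and
(c) the boundary functions `a ↦ h(a+ib)` converge to `F*f` in `L²(ℝ)` as `b → 0+`. -/
theorem statement3 (𝓕 : H2 ≃ₗᵢ[ℂ] H2) (h𝓕 : IsFourier 𝓕) (f : H2)
    (hf : ∀ᵐ y ∂(volume.restrict (Set.Iio (0 : ℝ))), f y = 0)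
    (h : ℂ → ℂ)
    (hh : ∀ ω : ℂ, 0 < ω.im →
      h ω = (Real.sqrt (2 * Real.pi) : ℂ)⁻¹ *
        ∫ y in Set.Ici (0 : ℝ), Complex.exp (Complex.I * ω * y) * f y) :
    DifferentiableOn ℂ h {ω : ℂ | 0 < ω.im} ∧
    (∀ b : ℝ, 0 < b →
      (∫⁻ a : ℝ, (‖h ((a : ℂ) + (b : ℂ) * Complex.I)‖₊ : ℝ≥0∞) ^ 2) ≤
        ∫⁻ y : ℝ, (‖f y‖₊ : ℝ≥0∞) ^ 2) ∧
    Tendsto (fun b : ℝ =>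
        eLpNorm (fun a : ℝ => h ((a : ℂ) + (b : ℂ) * Complex.I) - (𝓕.symm f) a) 2 volume)
      (nhdsWithin 0 (Set.Ioi 0)) (nhds 0) := by
  have hf' : ∀ᵐ y : ℝ, y < 0 → f y = 0 := (ae_restrict_iff' measurableSet_Iio).1 hf
  refine ⟨?_, ?_, ?_⟩
  · intro ω hω
    have h1 : DifferentiableAt ℂ (fun ω : ℂ => (Real.sqrt (2 * Real.pi) : ℂ)⁻¹ *
        ∫ y in Set.Ici (0 : ℝ), Complex.exp (Complex.I * ω * y) * f y) ω :=
      (aux_diff f ω hω).const_mul _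
    exact h1.differentiableWithinAt.congr (fun x hx => hh x hx) (hh ω hω)
  · intro b hb
    have h1 : eLpNorm (fun a : ℝ => h ((a : ℂ) + (b : ℂ) * Complex.I)) 2 volume ≤
        eLpNorm (⇑f) 2 volume := by
      rw [eLpNorm_congr_ae (aux_ae 𝓕 h𝓕 f h hh b hb), aux_iso,
        eLpNorm_congr_ae (auxG_memLp f b hb).coeFn_toLp]
      exact eLpNorm_mono (auxG_le f b hb)
    rw [aux_sq, aux_sq] at h1
    exact (ENNReal.rpow_le_rpow_iff (by norm_num)).1 h1
  · have h1 : ∀ b : ℝ, 0 < b →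
        eLpNorm (fun a : ℝ => h ((a : ℂ) + (b : ℂ) * Complex.I) - (𝓕.symm f) a) 2 volume =
        (∫⁻ y : ℝ, (‖auxG f b y - f y‖₊ : ℝ≥0∞) ^ 2) ^ (1 / 2 : ℝ) := by
      intro b hb
      rw [← aux_sq]
      have e1 : (fun a : ℝ => h ((a : ℂ) + (b : ℂ) * Complex.I) - (𝓕.symm f) a) =ᵐ[volume]
          ⇑(𝓕.symm ((auxG_memLp f b hb).toLp _ - f)) := by
        rw [map_sub]
        filter_upwards [aux_ae 𝓕 h𝓕 f h hh b hb,
          Lp.coeFn_sub (𝓕.symm ((auxG_memLp f b hb).toLp _)) (𝓕.symm f)] with a ha hs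
        rw [ha, hs, Pi.sub_apply]
      rw [eLpNorm_congr_ae e1, aux_iso]
      refine eLpNorm_congr_ae ?_
      filter_upwards [(auxG_memLp f b hb).coeFn_toLp,
        Lp.coeFn_sub ((auxG_memLp f b hb).toLp _) f] with a ha hs
      rw [hs, Pi.sub_apply, ha]
    have h2 : Tendsto (fun b : ℝ => ∫⁻ y : ℝ, (‖auxG f b y - f y‖₊ : ℝ≥0∞) ^ 2)
        (nhdsWithin 0 (Set.Ioi 0)) (nhds (∫⁻ y : ℝ, 0)) := by
      refine tendsto_lintegral_filter_of_dominated_convergence'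
        (fun y => (2 * (‖f y‖₊ : ℝ≥0∞)) ^ 2) ?_ ?_ ?_ ?_
      · refine Eventually.of_forall fun b => ?_
        exact (((auxG_meas f b).sub (Lp.memLp f).aestronglyMeasurable).enorm).pow_const 2
      · filter_upwards [self_mem_nhdsWithin] with b hb
        refine Eventually.of_forall fun y => ?_
        have : ‖auxG f b y - f y‖₊ ≤ 2 * ‖f y‖₊ := by
          have h3 := norm_sub_le (auxG f b y) (f y)
          have h4 := auxG_le f b hb y
          rw [← NNReal.coe_le_coe]
          push_cast
          linarith
        have h5 : (‖auxG f b y - f y‖₊ : ℝ≥0∞) ≤ 2 * (‖f y‖₊ : ℝ≥0∞) := by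
          exact_mod_cast this
        gcongr
      · have h3 := (Lp.memLp f).eLpNorm_ne_top
        rw [aux_sq] at h3
        simp only [mul_pow]
        rw [lintegral_const_mul' _ _ (by norm_num)]
        refine ENNReal.mul_ne_top (by norm_num) ?_
        intro h4
        rw [h4] at h3
        exact h3 (ENNReal.top_rpow_of_pos (by norm_num))
      · filter_upwards [hf'] with y hy
        have h3 : Tendsto (fun b : ℝ => auxG f b y - f y) (nhdsWithin 0 (Set.Ioi 0))
            (nhds 0) := by
          by_cases hy0 : y ∈ Ici (0 : ℝ)
          · simp only [auxG, indicator_of_mem hy0]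
            have hcont : Continuous (fun b : ℝ => (Real.exp (-b * y) : ℂ) * f y - f y) := by
              fun_prop
            have := (hcont.tendsto 0).mono_left (nhdsWithin_le_nhds (s := Set.Ioi 0))
            simpa using this
          · simp only [auxG, indicator_of_notMem hy0]
            rw [hy (not_le.1 hy0)]
            simp
        have hc2 : Continuous (fun z : ℂ => (‖z‖₊ : ℝ≥0∞) ^ 2) := by
          exact (ENNReal.continuous_pow 2).comp (ENNReal.continuous_coe.comp continuous_nnnorm)
        have := (hc2.tendsto 0).comp h3
        simpa [Function.comp_def] using this
    have h3 := (ENNReal.continuous_rpow_const (y := (1 / 2 : ℝ))).tendsto _ |>.comp h2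
    simp only [lintegral_zero] at h3
    rw [ENNReal.zero_rpow_of_pos (by norm_num)] at h3
    refine h3.congr' ?_
    filter_upwards [self_mem_nhdsWithin] with b hb
    exact (h1 b hb).symm
end
end

section
/- Let I ⊆ ℝ be a Borel set, and regard L²(I) as the closed subspace χ_I(M)L²(ℝ) of L²(ℝ). Let E be a positive operator measure on the Borel sets of ℝ with values in the bounded operators on L²(I) satisfying the covariance condition e^{-iaM} E(B) e^{iaM} = E(B+a) for all Borel B ⊆ ℝ and all a ∈ ℝ, where e^{-iaM} denotes multiplication by x ↦ e^{-iax}. Let g : ℝ → ℂ be measurable and admit an extension g̃ : {ω ∈ ℂ : Im ω ≥ 0} → ℂ such that g̃ is analytic on {Im ω > 0}, |g̃(ω)| ≤ 1 for all ω with Im ω ≥ 0, and lim_{b→0+} g̃(a+ib) = g(a) for almost all a ∈ ℝ. Then for every a ∈ ℝ, g(M)* E([a,∞)) g(M) ≤ E([a,∞)) as operators on L²(I), where g(M) denotes multiplication by g|_I. -/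
open MeasureTheory Complex Filter Set
open scoped ENNReal NNReal

noncomputable section

/-- A positive operator measure (POM) on the Borel sets of `ℝ` with values in the bounded
operators on a Hilbert space `K`: `0 ≤ E(B) ≤ I`, `E(∅) = 0`, and `E` is σ-additive in the
strong operator topology. -/
structure POM (K : Type) [NormedAddCommGroup K] [InnerProductSpace ℂ K] [CompleteSpace K] where
  toFun : Set ℝ → K →L[ℂ] K
  pos : ∀ B : Set ℝ, (toFun B).IsPositive
  le_one : ∀ B : Set ℝ, (ContinuousLinearMap.id ℂ K - toFun B).IsPositive
  empty : toFun ∅ = 0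
  sigma_additive : ∀ f : ℕ → Set ℝ, (∀ n, MeasurableSet (f n)) →
    Pairwise (Function.onFun Disjoint f) →
    ∀ φ : K, HasSum (fun n => toFun (f n) φ) (toFun (⋃ n, f n) φ)

section Aux

variable {μ : Measure ℝ}

/-- measurable and bounded -/
def Bd (u : ℝ → ℂ) : Prop := Measurable u ∧ ∃ C : ℝ, ∀ x, ‖u x‖ ≤ C

lemma Bd.memLp {u : ℝ → ℂ} (hu : Bd u) (φ : Lp ℂ 2 μ) : MemLp (fun x => u x * φ x) 2 μ := by
  obtain ⟨hm, C, hC⟩ := hu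
  refine MemLp.of_le_mul (c := C) (Lp.memLp φ)
    (hm.aestronglyMeasurable.mul (Lp.aestronglyMeasurable φ)) (ae_of_all _ fun x => ?_)
  rw [norm_mul]
  exact mul_le_mul_of_nonneg_right (hC x) (norm_nonneg _)

lemma Bd.coe {u : ℝ → ℂ} (hu : Bd u) (φ : Lp ℂ 2 μ) :
    (mulLp u φ : ℝ → ℂ) =ᵐ[μ] fun x => u x * φ x := by
  unfold mulLp
  rw [dif_pos (hu.memLp φ)]
  exact MemLp.coeFn_toLp _

lemma Bd.mul {u v : ℝ → ℂ} (hu : Bd u) (hv : Bd v) : Bd (fun x => u x * v x) := by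
  obtain ⟨hm, C, hC⟩ := hu
  obtain ⟨hm', C', hC'⟩ := hv
  refine ⟨hm.mul hm', C * C', fun x => ?_⟩
  rw [norm_mul]
  exact mul_le_mul (hC x) (hC' x) (norm_nonneg _) ((norm_nonneg _).trans (hC x))

lemma Bd.add {u v : ℝ → ℂ} (hu : Bd u) (hv : Bd v) : Bd (fun x => u x + v x) := by
  obtain ⟨hm, C, hC⟩ := hu
  obtain ⟨hm', C', hC'⟩ := hv
  exact ⟨hm.add hm', C + C', fun x => norm_add_le_of_le (hC x) (hC' x)⟩

lemma Bd.const (c : ℂ) : Bd (fun _ => c) := ⟨measurable_const, ‖c‖, fun _ => le_rfl⟩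

lemma mulLp_mulLp {u v : ℝ → ℂ} (hu : Bd u) (hv : Bd v) (φ : Lp ℂ 2 μ) :
    mulLp u (mulLp v φ) = mulLp (fun x => u x * v x) φ := by
  apply Lp.ext
  filter_upwards [hu.coe (mulLp v φ), hv.coe φ, (hu.mul hv).coe φ] with x h1 h2 h3
  rw [h1, h2, h3, mul_assoc]

lemma mulLp_add {u v : ℝ → ℂ} (hu : Bd u) (hv : Bd v) (φ : Lp ℂ 2 μ) :
    mulLp (fun x => u x + v x) φ = mulLp u φ + mulLp v φ := by
  apply Lp.ext
  filter_upwards [hu.coe φ, hv.coe φ, (hu.add hv).coe φ,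
    Lp.coeFn_add (mulLp u φ) (mulLp v φ)] with x h1 h2 h3 h4
  rw [h3, h4, Pi.add_apply, h1, h2, add_mul]

lemma mulLp_const (c : ℂ) (φ : Lp ℂ 2 μ) : mulLp (fun _ => c) φ = c • φ := by
  apply Lp.ext
  filter_upwards [(Bd.const c).coe φ, Lp.coeFn_smul c φ] with x h1 h2
  rw [h1, h2, Pi.smul_apply, smul_eq_mul]

lemma inner_mulLp {u v : ℝ → ℂ} (hu : Bd u) (hv : Bd v)
    (huv : ∀ x, v x = (starRingEnd ℂ) (u x)) (φ ψ : Lp ℂ 2 μ) :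
    inner ℂ (mulLp u φ) ψ = inner ℂ φ (mulLp v ψ) := by
  rw [L2.inner_def, L2.inner_def]
  apply integral_congr_ae
  filter_upwards [hu.coe φ, hv.coe ψ] with x h1 h2
  rw [h1, h2, huv]
  simp only [RCLike.inner_apply, map_mul]
  ring

lemma tendsto_mulLp {u : ℕ → ℝ → ℂ} {v : ℝ → ℂ} (hu : ∀ n, Measurable (u n))
    (hu1 : ∀ n x, ‖u n x‖ ≤ 1) (hv : Measurable v) (hv1 : ∀ x, ‖v x‖ ≤ 1)
    (hlim : ∀ᵐ x ∂μ, Tendsto (fun n => u n x) atTop (nhds (v x))) (φ : Lp ℂ 2 μ) :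
    Tendsto (fun n => mulLp (u n) φ) atTop (nhds (mulLp v φ)) := by
  have bu : ∀ n, Bd (u n) := fun n => ⟨hu n, 1, hu1 n⟩
  have bv : Bd v := ⟨hv, 1, hv1⟩
  rw [tendsto_iff_norm_sub_tendsto_zero]
  have key : ∀ n, ‖mulLp (u n) φ - mulLp v φ‖ ^ 2 = ∫ x, ‖(u n x - v x) * φ x‖ ^ 2 ∂μ := by
    intro n
    rw [← inner_self_eq_norm_sq (𝕜 := ℂ), L2.inner_def, ← integral_re]
    · apply integral_congr_ae
      filter_upwards [(bu n).coe φ, bv.coe φ,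
        Lp.coeFn_sub (mulLp (u n) φ) (mulLp v φ)] with x h1 h2 h3
      rw [h3, Pi.sub_apply, h1, h2, inner_self_eq_norm_sq (𝕜 := ℂ), sub_mul]
    · exact L2.integrable_inner _ _
  have h2 : Tendsto (fun n => ‖mulLp (u n) φ - mulLp v φ‖ ^ 2) atTop (nhds 0) := by
    simp only [key]
    have : (0:ℝ) = ∫ x, (0:ℝ) ∂μ := by simp
    rw [this]
    refine tendsto_integral_of_dominated_convergence (fun x => 4 * ‖φ x‖ ^ 2) ?_ ?_ ?_ ?_
    · intro n
      exact ((((hu n).sub hv).aestronglyMeasurable.mul (Lp.aestronglyMeasurable φ)).norm.pow 2)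
    · exact ((memLp_two_iff_integrable_sq_norm (Lp.aestronglyMeasurable φ)).1 (Lp.memLp φ)).const_mul 4
    · intro n
      refine ae_of_all _ fun x => ?_
      rw [norm_mul, mul_pow, Real.norm_of_nonneg (by positivity)]
      have : ‖u n x - v x‖ ≤ 2 := (norm_sub_le _ _).trans (by linarith [hu1 n x, hv1 x])
      have : ‖u n x - v x‖ ^ 2 ≤ 4 := by nlinarith [norm_nonneg (u n x - v x)]
      exact mul_le_mul_of_nonneg_right this (by positivity)
    · filter_upwards [hlim] with x hx
      have : Tendsto (fun n => ‖(u n x - v x) * φ x‖ ^ 2) atTop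
          (nhds (‖(v x - v x) * φ x‖ ^ 2)) :=
        (((hx.sub_const (v x)).mul_const (φ x)).norm).pow 2
      simpa using this
  have h3 := h2.sqrt
  simpa [Real.sqrt_sq] using h3

/-- `u` acts contractively w.r.t. the form of `T`. -/
def Ctr (T : Lp ℂ 2 μ →L[ℂ] Lp ℂ 2 μ) (u : ℝ → ℂ) : Prop :=
  Measurable u ∧ (∀ x, ‖u x‖ ≤ 1) ∧ ∀ φ : Lp ℂ 2 μ,
    (inner ℂ (mulLp u φ) (T (mulLp u φ)) : ℂ).re ≤ (inner ℂ φ (T φ) : ℂ).re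

lemma Ctr.bd {T : Lp ℂ 2 μ →L[ℂ] Lp ℂ 2 μ} {u : ℝ → ℂ} (h : Ctr T u) : Bd u :=
  ⟨h.1, 1, h.2.1⟩

lemma Ctr.mul {T : Lp ℂ 2 μ →L[ℂ] Lp ℂ 2 μ} {u v : ℝ → ℂ} (hu : Ctr T u) (hv : Ctr T v) :
    Ctr T (fun x => u x * v x) := by
  refine ⟨hu.1.mul hv.1, fun x => ?_, fun φ => ?_⟩
  · rw [norm_mul]; exact mul_le_one₀ (hu.2.1 x) (norm_nonneg _) (hv.2.1 x)
  · rw [← mulLp_mulLp hu.bd hv.bd]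
    exact (hu.2.2 _).trans (hv.2.2 _)

lemma Ctr.const {T : Lp ℂ 2 μ →L[ℂ] Lp ℂ 2 μ} (hT : T.IsPositive) {c : ℂ} (hc : ‖c‖ ≤ 1) :
    Ctr T (fun _ => c) := by
  refine ⟨measurable_const, fun _ => hc, fun φ => ?_⟩
  rw [mulLp_const, map_smul, inner_smul_left, inner_smul_right, ← mul_assoc,
    ← Complex.normSq_eq_conj_mul_self, Complex.re_ofReal_mul]
  have h0 : 0 ≤ (inner ℂ φ (T φ) : ℂ).re := hT.re_inner_nonneg_right φ
  have : Complex.normSq c ≤ 1 := by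
    rw [Complex.normSq_eq_norm_sq]; nlinarith [norm_nonneg c]
  nlinarith

lemma Ctr.lim {T : Lp ℂ 2 μ →L[ℂ] Lp ℂ 2 μ} {u : ℕ → ℝ → ℂ} {v : ℝ → ℂ}
    (hu : ∀ n, Ctr T (u n)) (hv : Measurable v) (hv1 : ∀ x, ‖v x‖ ≤ 1)
    (hlim : ∀ᵐ x ∂μ, Tendsto (fun n => u n x) atTop (nhds (v x))) : Ctr T v := by
  refine ⟨hv, hv1, fun φ => ?_⟩
  have h1 := tendsto_mulLp (fun n => (hu n).1) (fun n => (hu n).2.1) hv hv1 hlim φ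
  have h2 := (T.continuous.tendsto _).comp h1
  have h3 := (Complex.continuous_re.tendsto _).comp (h1.inner (𝕜 := ℂ) h2)
  exact le_of_tendsto h3 (Eventually.of_forall fun n => (hu n).2.2 φ)

lemma one_add_ne {γ w : ℂ} (hγ : ‖γ‖ < 1) (hw : ‖w‖ ≤ 1) :
    1 - ‖γ‖ ≤ ‖1 + (starRingEnd ℂ) γ * w‖ := by
  have h := norm_sub_le_norm_add (1:ℂ) ((starRingEnd ℂ) γ * w)
  rw [norm_one, norm_mul, RCLike.norm_conj] at h
  nlinarith [norm_nonneg γ]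

lemma mobius_norm {γ w : ℂ} (hγ : ‖γ‖ < 1) (hw : ‖w‖ ≤ 1) :
    ‖(γ + w) / (1 + (starRingEnd ℂ) γ * w)‖ ≤ 1 := by
  have hpos : 0 < ‖1 + (starRingEnd ℂ) γ * w‖ := by linarith [one_add_ne hγ hw]
  rw [norm_div, div_le_one hpos]
  have e : ‖1 + (starRingEnd ℂ) γ * w‖ ^ 2 - ‖γ + w‖ ^ 2 = (1 - ‖γ‖ ^ 2) * (1 - ‖w‖ ^ 2) := by
    simp only [← Complex.normSq_eq_norm_sq, Complex.normSq_apply]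
    simp
    ring
  have : 0 ≤ (1 - ‖γ‖ ^ 2) * (1 - ‖w‖ ^ 2) :=
    mul_nonneg (by nlinarith [norm_nonneg γ]) (by nlinarith [norm_nonneg w])
  exact le_of_sq_le_sq (by linarith) hpos.le

lemma form_id {K : Type*} [NormedAddCommGroup K] [InnerProductSpace ℂ K] (T : K →L[ℂ] K)
    (γ : ℂ) (χ η : K) :
    (inner ℂ (χ + (starRingEnd ℂ) γ • η) (T (χ + (starRingEnd ℂ) γ • η)) : ℂ)
      - inner ℂ (γ • χ + η) (T (γ • χ + η))
      = (1 - γ * (starRingEnd ℂ) γ) * (inner ℂ χ (T χ) - inner ℂ η (T η)) := by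
  simp only [map_add, map_smul, inner_add_left, inner_add_right, inner_smul_left,
    inner_smul_right, Complex.conj_conj]
  ring

lemma Ctr.mobius {T : Lp ℂ 2 μ →L[ℂ] Lp ℂ 2 μ} {u : ℝ → ℂ} (hu : Ctr T u)
    {γ : ℂ} (hγ : ‖γ‖ < 1) :
    Ctr T (fun x => (γ + u x) / (1 + (starRingEnd ℂ) γ * u x)) := by
  have hm := hu.1
  refine ⟨by fun_prop, fun x => mobius_norm hγ (hu.2.1 x), fun φ => ?_⟩
  have hpos : ∀ x, 0 < ‖1 + (starRingEnd ℂ) γ * u x‖ := fun x => by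
    linarith [one_add_ne hγ (hu.2.1 x)]
  have hne : ∀ x, 1 + (starRingEnd ℂ) γ * u x ≠ 0 := fun x => norm_pos_iff.1 (hpos x)
  have bd : Bd (fun x => (1 + (starRingEnd ℂ) γ * u x)⁻¹) := by
    refine ⟨by fun_prop, (1 - ‖γ‖)⁻¹, fun x => ?_⟩
    rw [norm_inv]
    exact inv_anti₀ (by linarith) (one_add_ne hγ (hu.2.1 x))
  have b1 := Bd.const 1
  have bγ := Bd.const γ
  have bγ' := Bd.const ((starRingEnd ℂ) γ)
  set χ := mulLp (fun x => (1 + (starRingEnd ℂ) γ * u x)⁻¹) φ with hχ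
  have e1 : φ = χ + (starRingEnd ℂ) γ • mulLp u χ := by
    have : mulLp (fun x => 1 + (starRingEnd ℂ) γ * u x) χ = φ := by
      rw [hχ, mulLp_mulLp (b1.add (bγ'.mul hu.bd)) bd]
      have : (fun x => (1 + (starRingEnd ℂ) γ * u x) * (1 + (starRingEnd ℂ) γ * u x)⁻¹)
          = fun _ => (1:ℂ) := by
        funext x; exact mul_inv_cancel₀ (hne x)
      rw [this, mulLp_const, one_smul]
    rw [mulLp_add b1 (bγ'.mul hu.bd), ← mulLp_mulLp bγ' hu.bd, mulLp_const, mulLp_const,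
      one_smul] at this
    exact this.symm
  have e2 : mulLp (fun x => (γ + u x) / (1 + (starRingEnd ℂ) γ * u x)) φ
      = γ • χ + mulLp u χ := by
    have : mulLp (fun x => γ + u x) χ
        = mulLp (fun x => (γ + u x) / (1 + (starRingEnd ℂ) γ * u x)) φ := by
      rw [hχ, mulLp_mulLp (bγ.add hu.bd) bd]
      rfl
    rw [← this, mulLp_add bγ hu.bd, mulLp_const]
  rw [e2]
  have e3 := congrArg Complex.re (form_id T γ χ (mulLp u χ))
  rw [← e1, Complex.mul_conj, ← Complex.ofReal_one, ← Complex.ofReal_sub,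
    Complex.re_ofReal_mul, Complex.sub_re, Complex.sub_re, Complex.normSq_eq_norm_sq] at e3
  have h4 := hu.2.2 χ
  have : 0 ≤ 1 - ‖γ‖ ^ 2 := by nlinarith [norm_nonneg γ]
  nlinarith [mul_nonneg this (sub_nonneg.2 h4)]

/-- Schur class on the disc -/
def Schur (f : ℂ → ℂ) : Prop :=
  DifferentiableOn ℂ f (Metric.ball 0 1) ∧ ∀ z ∈ Metric.ball (0:ℂ) 1, ‖f z‖ ≤ 1

lemma schur_step {f : ℂ → ℂ} (hf : Schur f) (hγ : ‖f 0‖ < 1) :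
    ∃ f1, Schur f1 ∧ ∀ z ∈ Metric.ball (0:ℂ) 1,
      f z = (f 0 + z * f1 z) / (1 + (starRingEnd ℂ) (f 0) * (z * f1 z)) := by
  set γ := f 0 with hγd
  have hγ' : ‖-γ‖ < 1 := by rwa [norm_neg]
  set h : ℂ → ℂ := fun z => (-γ + f z) / (1 + (starRingEnd ℂ) (-γ) * f z) with hh
  have hne : ∀ z ∈ Metric.ball (0:ℂ) 1, 1 + (starRingEnd ℂ) (-γ) * f z ≠ 0 := fun z hz =>
    norm_pos_iff.1 (by linarith [one_add_ne hγ' (hf.2 z hz)])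
  have hd : DifferentiableOn ℂ h (Metric.ball 0 1) :=
    (hf.1.const_add _).div ((hf.1.const_mul _).const_add _) hne
  have h0 : h 0 = 0 := by simp [hh, ← hγd]
  have hmaps : MapsTo h (Metric.ball 0 1) (Metric.closedBall (h 0) 1) := by
    intro z hz
    rw [h0, mem_closedBall_zero_iff]
    exact mobius_norm hγ' (hf.2 z hz)
  have hb : Metric.ball (0:ℂ) 1 ∈ nhds (0:ℂ) := Metric.ball_mem_nhds _ one_pos
  refine ⟨dslope h 0, ⟨(Complex.differentiableOn_dslope hb).2 hd, fun z hz => ?_⟩, fun z hz => ?_⟩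
  · simpa using Complex.norm_dslope_le_div_of_mapsTo_ball hd hmaps hz
  · have e : z * dslope h 0 z = h z := by
      have := sub_smul_dslope h 0 z
      simpa [h0] using this
    have e1 := hne z hz
    have e2 : 1 + (starRingEnd ℂ) γ * h z ≠ 0 := by
      have : ‖h z‖ ≤ 1 := mobius_norm hγ' (hf.2 z hz)
      exact norm_pos_iff.1 (by linarith [one_add_ne hγ this])
    rw [e, eq_div_iff e2]
    have e3 : h z * (1 + (starRingEnd ℂ) (-γ) * f z) = -γ + f z := div_mul_cancel₀ _ e1
    rw [map_neg] at e3
    linear_combination -e3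

lemma schur_approx {T : Lp ℂ 2 μ →L[ℂ] Lp ℂ 2 μ} (hT : T.IsPositive) {q : ℝ → ℂ}
    (hq : Ctr T q) (hq1 : ∀ x, ‖q x‖ < 1) (n : ℕ) : ∀ f, Schur f →
    ∃ F k, Schur F ∧ DifferentiableOn ℂ k (Metric.ball 0 1) ∧
      (∀ z ∈ Metric.ball (0:ℂ) 1, f z - F z = z ^ n * k z) ∧ Ctr T (fun x => F (q x)) := by
  induction n with
  | zero =>
    intro f hf
    refine ⟨fun _ => 0, f, ⟨differentiableOn_const _, by simp⟩, hf.1, by simp, Ctr.const hT (by simp)⟩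
  | succ n ih =>
    intro f hf
    have h0 : (0:ℂ) ∈ Metric.ball (0:ℂ) 1 := by simp
    rcases lt_or_eq_of_le (hf.2 0 h0) with hγ | hγ
    · obtain ⟨f1, hf1, hff⟩ := schur_step hf hγ
      obtain ⟨F, k, hF, hk, hFk, hC⟩ := ih f1 hf1
      have hw : ∀ G, Schur G → ∀ z ∈ Metric.ball (0:ℂ) 1, ‖z * G z‖ ≤ 1 := by
        intro G hG z hz
        rw [norm_mul]
        exact mul_le_one₀ (by simpa using (mem_ball_zero_iff.1 hz).le) (norm_nonneg _) (hG.2 z hz)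
      have hne : ∀ G, Schur G → ∀ z ∈ Metric.ball (0:ℂ) 1,
          1 + (starRingEnd ℂ) (f 0) * (z * G z) ≠ 0 := fun G hG z hz =>
        norm_pos_iff.1 (by linarith [one_add_ne hγ (hw G hG z hz)])
      have dd : ∀ G, Schur G → DifferentiableOn ℂ (fun z => z * G z) (Metric.ball (0:ℂ) 1) :=
        fun G hG => differentiableOn_id.mul hG.1
      refine ⟨fun z => (f 0 + z * F z) / (1 + (starRingEnd ℂ) (f 0) * (z * F z)),
        fun z => (1 - f 0 * (starRingEnd ℂ) (f 0)) * k z /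
          ((1 + (starRingEnd ℂ) (f 0) * (z * f1 z)) * (1 + (starRingEnd ℂ) (f 0) * (z * F z))),
        ⟨?_, ?_⟩, ?_, ?_, ?_⟩
      · exact ((dd F hF).const_add _).div (((dd F hF).const_mul _).const_add _) (hne F hF)
      · exact fun z hz => mobius_norm hγ (hw F hF z hz)
      · exact (hk.const_mul _).div ((((dd f1 hf1).const_mul _).const_add _).mul
          (((dd F hF).const_mul _).const_add _))
          (fun z hz => mul_ne_zero (hne f1 hf1 z hz) (hne F hF z hz))
      · intro z hz
        have n1 := hne f1 hf1 z hz
        have n2 := hne F hF z hz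
        have e := hFk z hz
        rw [hff z hz]
        rw [div_sub_div _ _ n1 n2, ← mul_div_assoc]
        congr 1
        linear_combination (z * (1 - f 0 * (starRingEnd ℂ) (f 0))) * e
      · exact (hq.mul hC).mobius hγ
    · have hconst : EqOn f (Function.const ℂ (f 0)) (Metric.ball 0 1) := by
        refine Complex.eqOn_of_isPreconnected_of_isMaxOn_norm
          (convex_ball (0:ℂ) 1).isPreconnected Metric.isOpen_ball hf.1 h0 ?_
        intro z hz
        simpa [hγ] using hf.2 z hz
      refine ⟨f, fun _ => 0, hf, differentiableOn_const _, by simp, ?_⟩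
      have : (fun x => f (q x)) = fun _ => f 0 := by
        funext x
        exact hconst (mem_ball_zero_iff.2 (hq1 x))
      rw [this]
      exact Ctr.const hT hγ.le

lemma schur_ctr {T : Lp ℂ 2 μ →L[ℂ] Lp ℂ 2 μ} (hT : T.IsPositive) {q : ℝ → ℂ}
    (hq : Ctr T q) (hq1 : ∀ x, ‖q x‖ < 1) {f : ℂ → ℂ} (hf : Schur f)
    (hm : Measurable fun x => f (q x)) : Ctr T (fun x => f (q x)) := by
  choose F k hF hk hFk hC using fun n => schur_approx hT hq hq1 (n + 2) f hf
  refine Ctr.lim hC hm (fun x => hf.2 _ (mem_ball_zero_iff.2 (hq1 x))) (ae_of_all _ fun x => ?_)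
  have hx : q x ∈ Metric.ball (0:ℂ) 1 := mem_ball_zero_iff.2 (hq1 x)
  have h0 : (0:ℂ) ∈ Metric.ball (0:ℂ) 1 := by simp
  have bound : ∀ n, ‖F n (q x) - f (q x)‖ ≤ 2 * ‖q x‖ ^ (n + 2) := by
    intro n
    have z0 : f 0 - F n 0 = 0 := by simpa using hFk n 0 h0
    have := Complex.dist_le_mul_div_pow_of_mapsTo_ball_of_isLittleO
      (f := fun z => f z - F n z) (c := 0) (z := q x) (R₁ := 1) (R₂ := 2) (n := n + 1)
      (hf.1.sub (hF n).1) ?_ ?_ hx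
    · rw [dist_eq_norm, z0] at this
      rw [norm_sub_rev]
      simpa using this
    · intro z hz
      simp only [z0]
      rw [mem_closedBall_zero_iff]
      exact (norm_sub_le _ _).trans (by linarith [hf.2 z hz, (hF n).2 z hz])
    · simp only [z0, sub_zero]
      have hkc : ContinuousAt (fun z => z * k n z) 0 :=
        continuousAt_id.mul ((hk n).continuousOn.continuousAt (Metric.ball_mem_nhds _ one_pos))
      have hlo : (fun z => z * k n z) =o[nhds 0] (fun _ => (1:ℝ)) := by
        rw [Asymptotics.isLittleO_one_iff]
        have := hkc.tendsto
        simpa using this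
      have hO : (fun z : ℂ => z ^ (n + 1)) =O[nhds 0] (fun z : ℂ => ‖z‖ ^ (n + 1)) := by
        refine Asymptotics.IsBigO.of_bound 1 (Eventually.of_forall fun z => ?_)
        simp
      have := hO.mul_isLittleO hlo
      refine (this.congr' ?_ (Eventually.of_forall fun z => by simp))
      filter_upwards [Metric.ball_mem_nhds (0:ℂ) one_pos] with z hz
      rw [hFk n z hz]
      ring
  rw [tendsto_iff_norm_sub_tendsto_zero]
  refine squeeze_zero (fun _ => norm_nonneg _) bound ?_
  have := (tendsto_pow_atTop_nhds_zero_of_lt_one (norm_nonneg (q x)) (hq1 x))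
  have := ((tendsto_add_atTop_iff_nat 2).2 this).const_mul 2
  simpa using this

end Aux

section Aux2

lemma pom_split {K : Type} [NormedAddCommGroup K] [InnerProductSpace ℂ K] [CompleteSpace K]
    (E : POM K) {A B : Set ℝ} (hA : MeasurableSet A) (hB : MeasurableSet B) (hAB : Disjoint A B)
    (φ : K) : E.toFun (A ∪ B) φ = E.toFun A φ + E.toFun B φ := by
  let f : ℕ → Set ℝ := fun n => if n = 0 then A else if n = 1 then B else ∅
  have hU : (⋃ n, f n) = A ∪ B := by
    ext x
    simp only [mem_iUnion, mem_union]
    constructor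
    · rintro ⟨n, hn⟩
      by_cases h0 : n = 0
      · left; simpa [f, h0] using hn
      · by_cases h1 : n = 1
        · right; simpa [f, h1] using hn
        · simp [f, h0, h1] at hn
    · rintro (h | h)
      · exact ⟨0, by simpa [f] using h⟩
      · exact ⟨1, by simpa [f] using h⟩
  have h := E.sigma_additive f ?_ ?_ φ
  · rw [hU] at h
    have h2 : HasSum (fun n => E.toFun (f n) φ) (∑ n ∈ Finset.range 2, E.toFun (f n) φ) := by
      apply hasSum_sum_of_ne_finset_zero
      intro n hn
      have : 2 ≤ n := by simp at hn; omega
      have : f n = ∅ := by simp only [f]; rw [if_neg (by omega), if_neg (by omega)]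
      rw [this, E.empty]; rfl
    have := h.unique h2
    rw [this]
    simp [Finset.sum_range_succ, f]
  · intro n
    simp only [f]
    split_ifs
    exacts [hA, hB, MeasurableSet.empty]
  · intro i j hij
    simp only [Function.onFun, f]
    split_ifs
    all_goals first | (exfalso; omega) | exact hAB | exact hAB.symm | simp

lemma bd_exp (t : ℝ) : Bd (fun x : ℝ => Complex.exp (Complex.I * t * x)) := by
  refine ⟨by fun_prop, 1, fun x => ?_⟩
  beta_reduce
  rw [show Complex.I * t * x = ((t * x : ℝ) : ℂ) * Complex.I by push_cast; ring,
    Complex.norm_exp_ofReal_mul_I]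

lemma bd_exp_neg (t : ℝ) : Bd (fun x : ℝ => Complex.exp (-(Complex.I * t * x))) := by
  refine ⟨by fun_prop, 1, fun x => ?_⟩
  beta_reduce
  rw [show -(Complex.I * t * x) = ((-(t * x) : ℝ) : ℂ) * Complex.I by push_cast; ring,
    Complex.norm_exp_ofReal_mul_I]

lemma norm_exp_itx (t x : ℝ) : ‖Complex.exp (Complex.I * t * x)‖ = 1 := by
  rw [show Complex.I * t * x = ((t * x : ℝ) : ℂ) * Complex.I by push_cast; ring,
    Complex.norm_exp_ofReal_mul_I]

lemma ctr_exp (I : Set ℝ)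
    (E : POM (Lp ℂ 2 (volume.restrict I)))
    (hcov : ∀ (a : ℝ) (B : Set ℝ), MeasurableSet B → ∀ φ : Lp ℂ 2 (volume.restrict I),
      mulLp (fun x => Complex.exp (-(Complex.I * a * x)))
        (E.toFun B (mulLp (fun x => Complex.exp (Complex.I * a * x)) φ)) =
      E.toFun ((· + a) '' B) φ) (a t : ℝ) (ht : 0 ≤ t) :
    Ctr (E.toFun (Ici a)) (fun x => Complex.exp (Complex.I * t * x)) := by
  refine ⟨by fun_prop, fun x => (norm_exp_itx t x).le, fun φ => ?_⟩
  rw [inner_mulLp (bd_exp t) (bd_exp_neg t), hcov t _ measurableSet_Ici]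
  · have hs : Ici a = Ico a (a + t) ∪ Ici (a + t) :=
      (Ico_union_Ici_eq_Ici (by linarith)).symm
    have hd : Disjoint (Ico a (a + t)) (Ici (a + t)) := by
      rw [Set.disjoint_left]
      intro x hx hx'
      exact absurd hx.2 (not_lt.2 hx')
    rw [show (fun x => x + t) '' Ici a = Ici (a + t) by simp]
    conv_rhs => rw [hs]
    rw [pom_split E measurableSet_Ico measurableSet_Ici hd, inner_add_right, Complex.add_re]
    have : 0 ≤ (inner ℂ φ (E.toFun (Ico a (a + t)) φ) : ℂ).re :=
      (E.pos _).re_inner_nonneg_right φ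
    linarith
  · intro x
    rw [← Complex.exp_conj]
    simp

lemma cayley_im {z : ℂ} (hz : ‖z‖ < 1) {s b : ℝ} (hs : 0 ≤ s) (hb : 0 < b) :
    0 < ((s : ℂ) * (Complex.I * ((1 - z) / (1 + z))) + b * Complex.I).im := by
  have hre : 0 ≤ ((1 - z) / (1 + z)).re := by
    rw [Complex.div_re, ← add_div]
    apply div_nonneg _ (Complex.normSq_nonneg _)
    have : Complex.normSq z < 1 := by
      rw [Complex.normSq_eq_norm_sq]; nlinarith [norm_nonneg z]
    rw [Complex.normSq_apply] at this
    simp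
    nlinarith
  rw [Complex.add_im, Complex.im_ofReal_mul, Complex.im_ofReal_mul, Complex.I_mul_im,
    Complex.I_im, mul_one]
  have := mul_nonneg hs hre
  linarith

lemma lim_q (x : ℝ) (t : ℕ → ℝ) (ht : ∀ n, 0 < t n) (hlim : Tendsto t atTop (nhds 0)) :
    Tendsto (fun n => ((2 / t n : ℝ) : ℂ) * (Complex.I *
      ((1 - ((1 - t n ^ 2 : ℝ) : ℂ) * Complex.exp (Complex.I * t n * x)) /
       (1 + ((1 - t n ^ 2 : ℝ) : ℂ) * Complex.exp (Complex.I * t n * x))))) atTop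
      (nhds (x : ℂ)) := by
  have hne : ∀ n, ((t n : ℝ) : ℂ) ≠ 0 := fun n => by exact_mod_cast (ht n).ne'
  have htc : Tendsto (fun n => (t n : ℂ)) atTop (nhds 0) := by
    have := (Complex.continuous_ofReal.tendsto 0).comp hlim
    simpa [Function.comp_def] using this
  have htw : Tendsto (fun n => (t n : ℂ)) atTop (nhdsWithin 0 {0}ᶜ) :=
    tendsto_nhdsWithin_iff.2 ⟨htc, Eventually.of_forall hne⟩
  have hder : HasDerivAt (fun w : ℂ => Complex.exp (Complex.I * w * x)) (Complex.I * x) 0 := by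
    have h1 : HasDerivAt (fun w : ℂ => Complex.I * w * x) (Complex.I * x) 0 := by
      simpa using ((hasDerivAt_id (0:ℂ)).const_mul Complex.I).mul_const (x:ℂ)
    simpa using h1.cexp
  have hslope := (hasDerivAt_iff_tendsto_slope.1 hder).comp htw
  have hexp : Tendsto (fun n => Complex.exp (Complex.I * t n * x)) atTop (nhds 1) := by
    have := hder.continuousAt.tendsto.comp htc
    simpa [Function.comp_def] using this
  have hden : Tendsto (fun n => 1 + (1 - (t n : ℂ) ^ 2) * Complex.exp (Complex.I * t n * x))
      atTop (nhds (1 + (1 - 0 ^ 2) * 1)) :=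
    (((htc.pow 2).const_sub 1).mul hexp).const_add 1
  have hnum := (hslope.neg).add (htc.mul hexp)
  have hall := ((hnum.div hden (by norm_num)).const_mul (2 * Complex.I))
  have e : 2 * Complex.I * ((-(Complex.I * (x:ℂ)) + 0 * 1) / (1 + (1 - 0 ^ 2) * 1)) = x := by
    have := Complex.I_mul_I
    field_simp
    linear_combination (-2 * (x:ℂ)) * this
  rw [e] at hall
  refine hall.congr fun n => ?_
  have := hne n
  simp only [Function.comp, slope_def_field, mul_zero, zero_mul, Complex.exp_zero, sub_zero,
    Pi.neg_apply, Pi.add_apply, Pi.div_apply]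
  push_cast
  rw [show (2:ℂ) / t n * (Complex.I * ((1 - (1 - (t n:ℂ) ^ 2) * Complex.exp (Complex.I * t n * x)) /
       (1 + (1 - (t n:ℂ) ^ 2) * Complex.exp (Complex.I * t n * x)))) =
      2 * Complex.I * (((1 - (1 - (t n:ℂ) ^ 2) * Complex.exp (Complex.I * t n * x)) / t n) /
       (1 + (1 - (t n:ℂ) ^ 2) * Complex.exp (Complex.I * t n * x))) by ring]
  congr 2
  field_simp
  ring

lemma ctr_shift {μ : Measure ℝ} {T : Lp ℂ 2 μ →L[ℂ] Lp ℂ 2 μ} (hT : T.IsPositive)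
    (hexp : ∀ t : ℝ, 0 ≤ t → Ctr T (fun x => Complex.exp (Complex.I * t * x)))
    {G : ℂ → ℂ} (hG : DifferentiableOn ℂ G {ω : ℂ | 0 < ω.im})
    (hG1 : ∀ ω : ℂ, 0 ≤ ω.im → ‖G ω‖ ≤ 1) {b : ℝ} (hb : 0 < b) :
    Ctr T (fun x => G ((x : ℂ) + b * Complex.I)) := by
  have hopen : IsOpen {ω : ℂ | 0 < ω.im} := isOpen_lt continuous_const Complex.continuous_im
  have him : ∀ x : ℝ, ((x : ℂ) + b * Complex.I) ∈ {ω : ℂ | 0 < ω.im} := fun x => by simpa using hb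
  let t : ℕ → ℝ := fun n => 1 / ((n : ℝ) + 2)
  have ht : ∀ n, 0 < t n := fun n => by positivity
  have ht1 : ∀ n, t n ^ 2 ≤ 1 := fun n => by
    have : t n ≤ 1 := by
      simp only [t]; rw [div_le_one (by positivity)]
      have : (0:ℝ) ≤ n := by positivity
      linarith
    nlinarith [ht n]
  have hlim : Tendsto t atTop (nhds 0) := by
    have := (tendsto_add_atTop_iff_nat 1).2 (tendsto_one_div_add_atTop_nhds_zero_nat (𝕜 := ℝ))
    refine this.congr fun n => ?_
    simp only [t]; push_cast; congr 1; ring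
  let q : ℕ → ℝ → ℂ := fun n x => ((1 - t n ^ 2 : ℝ) : ℂ) * Complex.exp (Complex.I * t n * x)
  have nr : ∀ n, ‖((1 - t n ^ 2 : ℝ) : ℂ)‖ < 1 := fun n => by
    rw [Complex.norm_real, Real.norm_of_nonneg (by linarith [ht1 n])]
    have := pow_pos (ht n) 2
    linarith
  have hq : ∀ n, Ctr T (q n) := fun n => (Ctr.const hT (nr n).le).mul (hexp _ (ht n).le)
  have hq1 : ∀ n x, ‖q n x‖ < 1 := fun n x => by
    simp only [q]
    rw [norm_mul, norm_exp_itx, mul_one]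
    exact nr n
  let c : ℕ → ℂ → ℂ := fun n z =>
    ((2 / t n : ℝ) : ℂ) * (Complex.I * ((1 - z) / (1 + z))) + b * Complex.I
  have hcim : ∀ n, MapsTo (c n) (Metric.ball 0 1) {ω : ℂ | 0 < ω.im} := fun n z hz =>
    cayley_im (mem_ball_zero_iff.1 hz) (by have := ht n; positivity) hb
  have hcd : ∀ n, DifferentiableOn ℂ (c n) (Metric.ball 0 1) := fun n => by
    have hne : ∀ z ∈ Metric.ball (0:ℂ) 1, 1 + z ≠ 0 := fun z hz h => by
      have : z = -1 := by linear_combination h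
      rw [this] at hz
      simp at hz
    exact ((((differentiableOn_id.const_sub 1).div (differentiableOn_id.const_add 1) hne).const_mul
      _).const_mul _).add_const _
  have hS : ∀ n, Schur (fun z => G (c n z)) := fun n =>
    ⟨hG.comp (hcd n) (hcim n), fun z hz => hG1 _ (le_of_lt (hcim n hz))⟩
  have hqc : ∀ n, Continuous (q n) := fun n => by simp only [q]; fun_prop
  have hC : ∀ n, Ctr T (fun x => G (c n (q n x))) := fun n => by
    refine schur_ctr hT (hq n) (hq1 n) (hS n) (Continuous.measurable ?_)
    exact (hS n).1.continuousOn.comp_continuous (hqc n) (fun x => mem_ball_zero_iff.2 (hq1 n x))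
  refine Ctr.lim hC (Continuous.measurable ?_) (fun x => hG1 _ (le_of_lt (him x)))
    (ae_of_all _ fun x => ?_)
  · exact hG.continuousOn.comp_continuous (by fun_prop) him
  · have hca : ContinuousAt G ((x : ℂ) + b * Complex.I) :=
      hG.continuousOn.continuousAt (hopen.mem_nhds (him x))
    exact hca.tendsto.comp ((lim_q x t ht hlim).add_const _)

end Aux2

/-- For a covariant POM `E` on `L²(I)` and a measurable `g : ℝ → ℂ` with a
bounded analytic extension to the upper half-plane having boundary values `g` a.e., one has
`g(M)* E([a,∞)) g(M) ≤ E([a,∞))` for every `a ∈ ℝ`, i.e.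
`⟨g(M)φ, E([a,∞)) g(M)φ⟩ ≤ ⟨φ, E([a,∞)) φ⟩` for all `φ ∈ L²(I)`. -/
theorem statement5 (I : Set ℝ) (hI : MeasurableSet I)
    (E : POM (Lp ℂ 2 (volume.restrict I)))
    (hcov : ∀ (a : ℝ) (B : Set ℝ), MeasurableSet B → ∀ φ : Lp ℂ 2 (volume.restrict I),
      mulLp (fun x => Complex.exp (-(Complex.I * a * x)))
        (E.toFun B (mulLp (fun x => Complex.exp (Complex.I * a * x)) φ)) =
      E.toFun ((· + a) '' B) φ)
    (g : ℝ → ℂ) (hg : Measurable g) (gt : ℂ → ℂ) (hgt : HardyExt g gt)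
    (a : ℝ) (φ : Lp ℂ 2 (volume.restrict I)) :
    (inner ℂ (mulLp g φ) (E.toFun (Set.Ici a) (mulLp g φ)) : ℂ).re ≤
      (inner ℂ φ (E.toFun (Set.Ici a) φ) : ℂ).re := by
  have hT := E.pos (Set.Ici a)
  have hexp := ctr_exp I E hcov a
  have hlim : Tendsto (fun n : ℕ => 1 / ((n : ℝ) + 1)) atTop (nhdsWithin 0 (Ioi 0)) :=
    tendsto_nhdsWithin_iff.2 ⟨tendsto_one_div_add_atTop_nhds_zero_nat,
      Eventually.of_forall fun n => by simp only [mem_Ioi]; positivity⟩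
  have hC : Ctr (E.toFun (Set.Ici a)) g := by
    refine Ctr.lim (u := fun n x => gt ((x : ℂ) + ((1 / ((n : ℝ) + 1) : ℝ) : ℂ) * Complex.I))
      (fun n => ctr_shift hT (fun t ht => hexp t ht) hgt.analytic hgt.bounded (by positivity))
      hg (fun x => ?_) ?_
    · rw [← hgt.agree x]
      exact hgt.bounded _ (by simp)
    · filter_upwards [ae_restrict_of_ae hgt.boundary] with x hx
      exact hx.comp hlim
  exact hC.2.2 φ
end
end
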